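/- arXiv:2604.01875 — 2 statements merged into one kernel-verified Lean document; each statement's English description precedes it below -/
import Mathlib

section
/- Let (M,d) be a uniformly discrete pointed metric space with base point 0. Then for every sequence (μ_n) of finitely supported functions μ_n : M → ℝ with sup_n ‖μ_n‖ < ∞ (free norm), one has ca(μ_n) ≤ 3·de(μ_n). (Since finitely supported elements are dense in the Lipschitz-free space F(M) and both quantities are continuous under uniform norm perturbation of the sequence, this is equivalent to F(M) being 3-Schur.) -/
open scoped BigOperators

/-- The free norm of a finitely supported function `μ : M → ℝ` over a pointed metric
space `(M, z)`: the supremum of the pairings `∑ x, μ x * f x` over all `1`-Lipschitz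
functions `f : M → ℝ` vanishing at the base point `z`. -/
noncomputable def freeNorm {M : Type*} [MetricSpace M] (z : M) (μ : M →₀ ℝ) : ℝ :=
  sSup {s | ∃ f : M → ℝ, f z = 0 ∧ LipschitzWith 1 f ∧ s = ∑ x ∈ μ.support, μ x * f x}

/-- `ca(μ_n) = inf_n sup {‖μ_k - μ_l‖ : k, l ≥ n}` computed with the free norm. -/
noncomputable def seqCa {M : Type*} [MetricSpace M] (z : M) (μ : ℕ → M →₀ ℝ) : ℝ :=
  sInf {t | ∃ n : ℕ, t = sSup {s | ∃ k, n ≤ k ∧ ∃ l, n ≤ l ∧ s = freeNorm z (μ k - μ l)}}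

/-- `de(μ_n) = sup_f inf_n sup {|⟨μ_k - μ_l, f⟩| : k, l ≥ n}` over `1`-Lipschitz `f`
vanishing at the base point. -/
noncomputable def seqDe {M : Type*} [MetricSpace M] (z : M) (μ : ℕ → M →₀ ℝ) : ℝ :=
  sSup {t | ∃ f : M → ℝ, f z = 0 ∧ LipschitzWith 1 f ∧
    t = sInf {u | ∃ n : ℕ, u = sSup {s | ∃ k, n ≤ k ∧ ∃ l, n ≤ l ∧
      s = |∑ x ∈ (μ k - μ l).support, (μ k - μ l) x * f x|}}}

/-!
Take differences `ν n = μ (k n) - μ (l n)` far out in the sequence with `‖ν n‖ > c`, normed by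
`1`-Lipschitz functions `f n`, which tend pointwise to `h` along an ultrafilter; each Lipschitz
function is eventually almost bounded by `de` on the `ν n`.

For a suitable finite `A ∋ z` and every finite `S ⊇ A`, the `ν n` are almost null, along the
ultrafilter, on `1`-Lipschitz functions supported in the set of points that `S` brings
substantially closer: far from `z` by a gliding hump over annuli, near `z` because `A` almost
minimizes the limit of `∑ x, |ν n x| * min (d(x, A)) R`, a quantity that uniform discreteness keeps
bounded.

By Baire's theorem, the compact set `K` of functions of Lipschitz constant about `3` whose slope at
points of `A` is about `1` and which agree with `h` on `A` contains some `u` such that, for a finite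
`S ⊇ A`, all `w ∈ K` with `w = u` on `S` satisfy `⟨ν n, w⟩ ≤ 3 * de` approximately and eventually.
Off the points that `S` brings closer, `f n` can be pasted with `u` on `S` inside `K`, since a path
`x → A → y` has length at most about `3 * d(x, y)`; what remains is almost null, and
`c ≤ 3 * de` follows.
-/

open Filter Topology Function

section Pairing

variable {M : Type*}

/-- The bilinear pairing `⟨ν, f⟩ = ∑ x, ν x * f x` of finitely supported functions with
arbitrary functions. -/
noncomputable def pairing : (M →₀ ℝ) →ₗ[ℝ] (M → ℝ) →ₗ[ℝ] ℝ :=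
  Finsupp.linearCombination ℝ LinearMap.proj

lemma pairing_apply (ν : M →₀ ℝ) (f : M → ℝ) : pairing ν f = ∑ x ∈ ν.support, ν x * f x := by
  simp [pairing, Finsupp.linearCombination_apply, Finsupp.sum, LinearMap.sum_apply]

lemma continuous_pairing (ν : M →₀ ℝ) : Continuous (pairing ν) := by
  simp only [funext (pairing_apply ν)]
  fun_prop

lemma pairing_le_sum_abs_mul (ν : M →₀ ℝ) {f g : M → ℝ} (hfg : ∀ x, |f x| ≤ g x) :
    pairing ν f ≤ ∑ x ∈ ν.support, |ν x| * g x := by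
  rw [pairing_apply]
  refine Finset.sum_le_sum fun x _ => (le_abs_self _).trans ?_
  rw [abs_mul]
  exact mul_le_mul_of_nonneg_left (hfg x) (abs_nonneg _)

/-- Baire's theorem, applied in `K` to the closed sets on which the bound holds from some index
on. -/
lemma exists_finset_eventually_pairing_le {K : Set (M → ℝ)} (hK : IsCompact K) (hne : K.Nonempty)
    {ν : ℕ → M →₀ ℝ} {b : ℝ} (hb : ∀ u ∈ K, ∀ᶠ j in atTop, pairing (ν j) u ≤ b) :
    ∃ u₀ ∈ K, ∃ I : Finset M, ∀ᶠ j in atTop, ∀ w ∈ K, Set.EqOn w u₀ I → pairing (ν j) w ≤ b := by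
  have : CompactSpace K := isCompact_iff_compactSpace.1 hK
  have : Nonempty K := hne.to_subtype
  let A : ℕ → Set K := fun n => {u | ∀ j ≥ n, pairing (ν j) u ≤ b}
  have hA_closed (n : ℕ) : IsClosed (A n) := by
    simp only [A, Set.ofPred_forall]
    exact isClosed_biInter fun j _ =>
      isClosed_le ((continuous_pairing (ν j)).comp continuous_subtype_val) continuous_const
  have hA_cover : ⋃ n, A n = Set.univ :=
    Set.eq_univ_of_forall fun u => Set.mem_iUnion.2 (eventually_atTop.1 (hb u u.2))
  obtain ⟨n, u₀, hu₀⟩ := nonempty_interior_of_iUnion_of_closed hA_closed hA_cover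
  obtain ⟨t, htA, ht_open, hu₀t⟩ := mem_interior.1 hu₀
  obtain ⟨V, hV, rfl⟩ := isOpen_induced_iff.1 ht_open
  obtain ⟨I, v, hv, hvV⟩ := isOpen_pi_iff.1 hV u₀ hu₀t
  refine ⟨u₀, u₀.2, I, eventually_atTop.2 ⟨n, fun j hj w hw hwI => ?_⟩⟩
  have hwV : w ∈ V := hvV fun i hi => by
    rw [hwI hi]
    exact (hv i hi).2
  exact @htA ⟨w, hw⟩ hwV j hj

end Pairing

section LipBall

variable {M : Type*} [PseudoMetricSpace M] {z : M} {L L' : ℝ} {f g : M → ℝ}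

/-- The closed ball of radius `L` of the space `Lip₀(M)` of Lipschitz functions vanishing at the
base point `z`. The radius is a real number, so that no coercion from `ℝ≥0` is needed in
estimates. -/
def lipBall (z : M) (L : ℝ) : Set (M → ℝ) :=
  {f | f z = 0 ∧ ∀ x y, |f x - f y| ≤ L * dist x y}

lemma mem_lipBall_one : f ∈ lipBall z 1 ↔ f z = 0 ∧ LipschitzWith 1 f := by
  simp [lipBall, lipschitzWith_iff_dist_le_mul, Real.dist_eq]

lemma zero_mem_lipBall (z : M) (hL : 0 ≤ L) : 0 ∈ lipBall z L :=
  ⟨rfl, fun x y => by simpa using mul_nonneg hL dist_nonneg⟩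

lemma lipBall_mono (z : M) (h : L ≤ L') : lipBall z L ⊆ lipBall z L' :=
  fun _ hf => ⟨hf.1, fun x y => (hf.2 x y).trans (by gcongr)⟩

lemma abs_le_of_mem_lipBall (hf : f ∈ lipBall z L) (x : M) : |f x| ≤ L * dist x z := by
  simpa [hf.1] using hf.2 x z

lemma abs_le_mul_infDist_of_mem_lipBall (hL : 0 < L) (hf : f ∈ lipBall z L) {A : Set M}
    (hne : A.Nonempty) (hfA : ∀ s ∈ A, f s = 0) (x : M) : |f x| ≤ L * Metric.infDist x A := by
  refine (div_le_iff₀' hL).1 ((Metric.le_infDist hne).2 fun s hs => (div_le_iff₀' hL).2 ?_)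
  simpa [hfA s hs] using hf.2 x s

lemma smul_mem_lipBall (a : ℝ) (hf : f ∈ lipBall z L) : a • f ∈ lipBall z (|a| * L) := by
  refine ⟨by simp [hf.1], fun x y => ?_⟩
  rw [Pi.smul_apply, Pi.smul_apply, ← smul_sub, smul_eq_mul, abs_mul, mul_assoc]
  exact mul_le_mul_of_nonneg_left (hf.2 x y) (abs_nonneg a)

lemma inv_smul_mem_lipBall (hL : 0 < L) (hf : f ∈ lipBall z L) : L⁻¹ • f ∈ lipBall z 1 := by
  simpa [abs_of_pos hL, hL.ne'] using smul_mem_lipBall L⁻¹ hf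

lemma neg_mem_lipBall (hf : f ∈ lipBall z L) : -f ∈ lipBall z L := by
  simpa using smul_mem_lipBall (-1) hf

lemma sub_mem_lipBall (hf : f ∈ lipBall z L) (hg : g ∈ lipBall z L') :
    f - g ∈ lipBall z (L + L') := by
  refine ⟨by simp [hf.1, hg.1], fun x y => ?_⟩
  rw [Pi.sub_apply, Pi.sub_apply, sub_sub_sub_comm, add_mul]
  exact (abs_sub _ _).trans (add_le_add (hf.2 x y) (hg.2 x y))

lemma sup_mem_lipBall (hf : f ∈ lipBall z L) (hg : g ∈ lipBall z L) : f ⊔ g ∈ lipBall z L :=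
  ⟨by simp [hf.1, hg.1],
    fun x y => (abs_max_sub_max_le_max _ _ _ _).trans (max_le (hf.2 x y) (hg.2 x y))⟩

lemma inf_mem_lipBall (hf : f ∈ lipBall z L) (hg : g ∈ lipBall z L) : f ⊓ g ∈ lipBall z L :=
  ⟨by simp [hf.1, hg.1],
    fun x y => (abs_min_sub_min_le_max _ _ _ _).trans (max_le (hf.2 x y) (hg.2 x y))⟩

lemma sum_mem_lipBall_of_pairwiseDisjoint {ι : Type*} {s : Finset ι} {φ : ι → M → ℝ}
    (hL : 0 ≤ L) (hφ : ∀ i ∈ s, φ i ∈ lipBall z L)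
    (hdisj : (s : Set ι).PairwiseDisjoint fun i => support (φ i)) :
    ∑ i ∈ s, φ i ∈ lipBall z (2 * L) := by
  classical
  refine ⟨by simpa using Finset.sum_eq_zero fun i hi => (hφ i hi).1, fun x y => ?_⟩
  let active (p : M) : Finset ι := {i ∈ s | φ i p ≠ 0}
  have hcard (p : M) : (active p).card ≤ 1 := by
    refine Finset.card_le_one.2 fun a ha b hb => ?_
    rw [Finset.mem_filter] at ha hb
    by_contra hab
    exact Set.disjoint_left.1 (hdisj ha.1 hb.1 hab) ha.2 hb.2
  have hsub : active x ∪ active y ⊆ s :=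
    Finset.union_subset (Finset.filter_subset _ _) (Finset.filter_subset _ _)
  calc |(∑ i ∈ s, φ i) x - (∑ i ∈ s, φ i) y|
      = |∑ i ∈ s, (φ i x - φ i y)| := by simp
    _ = |∑ i ∈ active x ∪ active y, (φ i x - φ i y)| := by
        refine congrArg _ (Finset.sum_subset hsub fun i hi hi' => ?_).symm
        simp_all [active]
    _ ≤ ∑ _ ∈ active x ∪ active y, L * dist x y :=
        (Finset.abs_sum_le_sum_abs _ _).trans
          (Finset.sum_le_sum fun i hi => (hφ i (hsub hi)).2 x y)
    _ = (active x ∪ active y).card * (L * dist x y) := by simp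
    _ ≤ 2 * (L * dist x y) := by
        gcongr
        exact_mod_cast (Finset.card_union_le _ _).trans (add_le_add (hcard x) (hcard y))
    _ = 2 * L * dist x y := by ring

lemma mem_lipBall_of_abs_le {θ R : ℝ} (hθ : 0 < θ) (hd : Pairwise fun x y : M => θ ≤ dist x y)
    (hf0 : f z = 0) (hf : ∀ x, |f x| ≤ R) : f ∈ lipBall z (2 * R / θ) := by
  refine ⟨hf0, fun x y => ?_⟩
  have hR : 0 ≤ R := (abs_nonneg _).trans (hf z)
  rcases eq_or_ne x y with rfl | hxy
  · simp
  calc |f x - f y| ≤ 2 * R := by linarith [abs_sub (f x) (f y), hf x, hf y]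
    _ = 2 * R / θ * θ := (div_mul_cancel₀ _ hθ.ne').symm
    _ ≤ 2 * R / θ * dist x y := by gcongr; exact hd hxy

lemma isCompact_lipBall (z : M) (L : ℝ) : IsCompact (lipBall z L) := by
  have hclosed : IsClosed (lipBall z L) := by
    refine IsClosed.and (isClosed_eq (continuous_apply z) continuous_const) ?_
    simp only [Set.ofPred_forall]
    exact isClosed_iInter fun x => isClosed_iInter fun y => isClosed_le (by fun_prop) (by fun_prop)
  exact (isCompact_univ_pi fun _ => isCompact_Icc).of_isClosed_subset hclosed
    fun f hf x _ => abs_le.1 (abs_le_of_mem_lipBall hf x)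

lemma pairing_le_mul_of_mem_lipBall {ν : M →₀ ℝ} {B : Set M} {c : ℝ}
    (hc : ∀ φ ∈ lipBall z 1, support φ ⊆ B → pairing ν φ ≤ c) (hL : 0 < L)
    (hf : f ∈ lipBall z L) (hfB : support f ⊆ B) : pairing ν f ≤ L * c := by
  have := hc _ (inv_smul_mem_lipBall hL hf) ((support_const_smul_subset _ _).trans hfB)
  rwa [map_smul, smul_eq_mul, inv_mul_le_iff₀ hL] at this

lemma exists_lipBall_cutoff {R : ℝ} (hR : 0 ≤ R) (hf : f ∈ lipBall z 1) :
    ∃ g ∈ lipBall z 2, (∀ x, |f x - g x| ≤ |f x|) ∧ support g ⊆ support f \ Metric.closedBall z R ∧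
      ∀ x ∉ Metric.closedBall z (2 * R), g x = f x := by
  let m : M → ℝ := fun x => 2 * max (dist x z - R) 0
  have hm0 (x : M) : 0 ≤ m x := by positivity
  have hm : m ∈ lipBall z 2 := by
    refine ⟨by simp [m, hR], fun x y => ?_⟩
    rw [← mul_sub, abs_mul, abs_two]
    gcongr
    refine (abs_max_sub_max_le_abs _ _ _).trans ?_
    rw [sub_sub_sub_cancel_right]
    exact abs_dist_sub_le x y z
  let g : M → ℝ := (f ⊓ m) ⊔ -m
  have hg (x : M) : g x = max (min (f x) (m x)) (-m x) := rfl
  refine ⟨g, sup_mem_lipBall (inf_mem_lipBall (lipBall_mono z one_le_two hf) hm)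
    (neg_mem_lipBall hm), fun x => ?_, fun x hx => ⟨fun hfx => hx ?_, fun hxR => hx ?_⟩,
    fun x hx => ?_⟩
  · have := hm0 x
    rcases le_total 0 (f x) with h | h <;> grind
  · simp [hg, hfx, hm0 x]
  · have : m x = 0 := by simpa [m] using hxR
    simp [hg, this]
  · have hfm : |f x| ≤ m x := by
      have := abs_le_of_mem_lipBall hf x
      rw [Metric.mem_closedBall] at hx
      grind
    rw [hg, min_eq_left (abs_le.1 hfm).2, max_eq_left (abs_le.1 hfm).1]

end LipBall

section CloserSet

variable {M : Type*} [PseudoMetricSpace M] {z : M} {A A' : Set M} {ε : ℝ}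

/-- The points whose distance to the set drops by a factor of more than `1 + ε` when `A` is
replaced by the larger set `A'`. -/
def closerSet (ε : ℝ) (A A' : Set M) : Set M :=
  {x | (1 + ε) * Metric.infDist x A' < Metric.infDist x A}

lemma isBounded_closerSet (hε : 0 < ε) (hzA : z ∈ A) (hzA' : z ∈ A')
    (hA' : Bornology.IsBounded A') : Bornology.IsBounded (closerSet ε A A') := by
  refine (Metric.isBounded_iff_subset_closedBall z).2
    ⟨Metric.diam A' / ε + Metric.diam A', fun x hx => ?_⟩
  rw [closerSet, Set.mem_ofPred_eq] at hx
  have hdist := Metric.dist_le_infDist_add_diam (x := x) hA' hzA'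
  have hdrop : Metric.infDist x A' ≤ Metric.diam A' / ε := by
    rw [le_div_iff₀' hε]
    linarith [Metric.infDist_le_dist_of_mem (x := x) hzA]
  exact Metric.mem_closedBall.2 (hdist.trans (by gcongr))

lemma disjoint_closerSet (hε : 0 ≤ ε) (A A' : Set M) : Disjoint A (closerSet ε A A') := by
  refine Set.disjoint_left.2 fun x hxA hx => ?_
  rw [closerSet, Set.mem_ofPred_eq, Metric.infDist_zero_of_mem hxA] at hx
  exact hx.not_ge (mul_nonneg (by positivity) Metric.infDist_nonneg)

lemma diff_subset_closerSet (hA : IsClosed A) (hne : A.Nonempty) :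
    A' \ A ⊆ closerSet ε A A' := fun x ⟨hxA', hxA⟩ => by
  rw [closerSet, Set.mem_ofPred_eq, Metric.infDist_zero_of_mem hxA', mul_zero]
  exact (hA.notMem_iff_infDist_pos hne).1 hxA

lemma mul_indicator_closerSet_le (hε : 0 < ε) (hzA : z ∈ A) (hAA' : A ⊆ A') (R : ℝ) (x : M) :
    ε / (1 + ε) * (closerSet ε A A' ∩ Metric.closedBall z R).indicator (Metric.infDist · A) x ≤
      min (Metric.infDist x A) R - min (Metric.infDist x A') R := by
  have hmono : Metric.infDist x A' ≤ Metric.infDist x A :=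
    Metric.infDist_le_infDist_of_subset hAA' ⟨z, hzA⟩
  by_cases hx : x ∈ closerSet ε A A' ∩ Metric.closedBall z R
  · have hR : Metric.infDist x A ≤ R := (Metric.infDist_le_dist_of_mem hzA).trans hx.2
    rw [Set.indicator_of_mem hx, min_eq_left hR, min_eq_left (hmono.trans hR), div_mul_eq_mul_div,
      div_le_iff₀ (by positivity)]
    linarith [show (1 + ε) * Metric.infDist x A' < Metric.infDist x A from hx.1]
  · rw [Set.indicator_of_notMem hx, mul_zero, sub_nonneg]
    exact min_le_min_right R hmono

end CloserSet

section Anchored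

variable {M : Type*} [PseudoMetricSpace M] {z : M} {A : Set M} {h : M → ℝ} {a L ε : ℝ}

/-- The `L`-Lipschitz functions that agree with `h` on `A` and whose slope between any point of
`A` and any other point is at most `a`. The agreement is encoded by the case `x = s`. -/
def anchoredLip (A : Set M) (h : M → ℝ) (a L : ℝ) : Set (M → ℝ) :=
  {u | (∀ x y, |u x - u y| ≤ L * dist x y) ∧ ∀ s ∈ A, ∀ x, |u x - h s| ≤ a * dist x s}

lemma eqOn_of_mem_anchoredLip {u : M → ℝ} (hu : u ∈ anchoredLip A h a L) : Set.EqOn u h A :=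
  fun s hs => sub_eq_zero.1 (abs_nonpos_iff.1 (by simpa using hu.2 s hs s))

lemma anchoredLip_subset_lipBall (hz : z ∈ A) (hhz : h z = 0) :
    anchoredLip A h a L ⊆ lipBall z L :=
  fun _ hu => ⟨(eqOn_of_mem_anchoredLip hu hz).trans hhz, hu.1⟩

lemma mem_anchoredLip_self (hh : h ∈ lipBall z 1) (ha : 1 ≤ a) (hL : 1 ≤ L) :
    h ∈ anchoredLip A h a L :=
  ⟨(lipBall_mono z hL hh).2, fun s _ x => (lipBall_mono z ha hh).2 x s⟩

lemma isCompact_anchoredLip (hz : z ∈ A) (hhz : h z = 0) : IsCompact (anchoredLip A h a L) := by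
  refine (isCompact_lipBall z L).of_isClosed_subset (.and ?_ ?_)
    (anchoredLip_subset_lipBall hz hhz)
  · simp only [Set.ofPred_forall]
    exact isClosed_iInter fun x => isClosed_iInter fun y => isClosed_le (by fun_prop) (by fun_prop)
  · simp only [Set.ofPred_forall]
    exact isClosed_biInter fun s _ => isClosed_iInter fun x =>
      isClosed_le (by fun_prop) (by fun_prop)

/-- A form of McShane's extension theorem. -/
lemma exists_extension_of_slope_le {Y : Set M} (hY : Y.Nonempty) {g κ : M → ℝ}
    (hκ : ∀ y ∈ Y, 0 ≤ κ y ∧ κ y ≤ L)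
    (hg : ∀ y ∈ Y, ∀ y' ∈ Y, |g y - g y'| ≤ κ y * dist y y') :
    ∃ f : M → ℝ, (∀ x y, |f x - f y| ≤ L * dist x y) ∧
      ∀ y ∈ Y, ∀ x, |f x - g y| ≤ κ y * dist x y := by
  have : Nonempty Y := hY.to_subtype
  have hcompat (x : M) {y y' : M} (hy : y ∈ Y) (hy' : y' ∈ Y) :
      g y - κ y * dist x y ≤ g y' + κ y' * dist x y' := by
    have hle := le_of_abs_le (hg y hy y' hy')
    have hle' : g y - g y' ≤ κ y' * dist y y' := by
      rw [dist_comm]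
      linarith [neg_le_of_abs_le (hg y' hy' y hy)]
    have htri : dist y y' ≤ dist x y + dist x y' := dist_triangle_left _ _ _
    rcases le_total (κ y) (κ y') with hk | hk
    · nlinarith [(hκ y hy).1, dist_nonneg (x := x) (y := y')]
    · nlinarith [(hκ y' hy').1, dist_nonneg (x := x) (y := y)]
  let f : M → ℝ := fun x => ⨅ y : Y, g y + κ y * dist x y
  have hbdd (x : M) : BddBelow (Set.range fun y : Y => g y + κ y * dist x y) := by
    obtain ⟨y₀, hy₀⟩ := hY
    exact ⟨_, Set.forall_mem_range.2 fun y => hcompat x hy₀ y.2⟩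
  have hf_le {y : M} (hy : y ∈ Y) (x : M) : f x ≤ g y + κ y * dist x y :=
    ciInf_le (hbdd x) ⟨y, hy⟩
  have hf_ge {y : M} (hy : y ∈ Y) (x : M) : g y - κ y * dist x y ≤ f x :=
    le_ciInf fun y' => hcompat x hy y'.2
  have hf_lip (x y : M) : f x - f y ≤ L * dist x y := by
    rw [sub_le_comm]
    refine le_ciInf fun w => ?_
    obtain ⟨hκ0, hκL⟩ := hκ w w.2
    nlinarith [hf_le w.2 x, dist_triangle x y w, dist_nonneg (x := x) (y := y)]
  refine ⟨f, fun x y => abs_le.2 ⟨?_, hf_lip x y⟩, fun y hy x => abs_le.2 ⟨?_, ?_⟩⟩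
  · linarith [dist_comm x y ▸ hf_lip y x]
  · linarith [hf_ge hy x]
  · linarith [hf_le hy x]

/-- The source of the constant `3`: away from `closerSet ε A S` a point `x` has an anchor `s ∈ A`
about as close as `y ∈ S`, and the path `x → s → y` has length about `3 * dist x y`. -/
lemma abs_sub_le_of_notMem_closerSet (hA : IsCompact A) (hne : A.Nonempty) (hε : 0 ≤ ε)
    {S : Set M} {x y : M} (hx : x ∉ closerSet ε A S) (hy : y ∈ S) {p q : ℝ}
    (hp : ∀ s ∈ A, |p - h s| ≤ (1 + ε) * dist x s) (hq : ∀ s ∈ A, |q - h s| ≤ (1 + ε) * dist y s) :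
    |p - q| ≤ (1 + ε) * (3 + 2 * ε) * dist x y := by
  obtain ⟨s, hs, hxs⟩ := hA.exists_infDist_eq_dist hne x
  have hanchor : dist x s ≤ (1 + ε) * dist x y := by
    rw [← hxs]
    exact (not_lt.1 hx).trans (by gcongr; exact Metric.infDist_le_dist_of_mem hy)
  have htri : dist y s ≤ dist x y + dist x s := dist_triangle_left _ _ _
  calc |p - q| ≤ |p - h s| + |q - h s| := by
        rw [abs_sub_comm q]
        exact abs_sub_le _ _ _
    _ ≤ (1 + ε) * dist x s + (1 + ε) * dist y s := add_le_add (hp s hs) (hq s hs)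
    _ ≤ (1 + ε) * (dist x y + 2 * dist x s) := by
        rw [← mul_add]
        exact mul_le_mul_of_nonneg_left (by linarith) (by linarith)
    _ ≤ (1 + ε) * (dist x y + 2 * ((1 + ε) * dist x y)) := by gcongr
    _ = (1 + ε) * (3 + 2 * ε) * dist x y := by ring

lemma exists_mem_anchoredLip_extending {Y : Set M} (hne : A.Nonempty) (hAY : A ⊆ Y) (ha : 0 ≤ a)
    (haL : a ≤ L) {g : M → ℝ} (hg : ∀ x ∈ Y, ∀ y ∈ Y, |g x - g y| ≤ L * dist x y)
    (hgh : ∀ s ∈ A, ∀ x ∈ Y, |g x - h s| ≤ a * dist x s) :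
    ∃ w ∈ anchoredLip A h a L, Set.EqOn w g Y := by
  classical
  let κ : M → ℝ := fun x => if x ∈ A then a else L
  have hgA {s : M} (hs : s ∈ A) : g s = h s :=
    sub_eq_zero.1 (abs_nonpos_iff.1 (by simpa using hgh s hs s (hAY hs)))
  have hκ : ∀ y ∈ Y, 0 ≤ κ y ∧ κ y ≤ L := fun y _ => by
    simp only [κ]
    split_ifs <;> grind
  have hg_slope : ∀ x ∈ Y, ∀ y ∈ Y, |g x - g y| ≤ κ x * dist x y := by
    intro x hx y hy
    by_cases hxA : x ∈ A
    · rw [hgA hxA, abs_sub_comm, dist_comm]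
      simpa [κ, hxA] using hgh x hxA y hy
    · simpa [κ, hxA] using hg x hx y hy
  obtain ⟨w, hw_lip, hw⟩ := exists_extension_of_slope_le (hne.mono hAY) hκ hg_slope
  refine ⟨w, ⟨hw_lip, fun s hs x => ?_⟩, fun y hy => ?_⟩
  · simpa [κ, hs, hgA hs] using hw s (hAY hs) x
  · exact sub_eq_zero.1 (abs_nonpos_iff.1 (by simpa using hw y hy y))

lemma exists_mem_anchoredLip_eqOn (hA : IsCompact A) (hne : A.Nonempty) (hε : 0 ≤ ε)
    {S : Set M} (hAS : A ⊆ S) {u f : M → ℝ}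
    (hu : u ∈ anchoredLip A h (1 + ε) ((1 + ε) * (3 + 2 * ε)))
    (hf : ∀ x y, |f x - f y| ≤ dist x y)
    (hfh : ∀ s ∈ A, ∀ x ∉ A, |f x - h s| ≤ (1 + ε) * dist x s) :
    ∃ w ∈ anchoredLip A h (1 + ε) ((1 + ε) * (3 + 2 * ε)),
      Set.EqOn w u S ∧ Set.EqOn w f (S ∪ closerSet ε A S)ᶜ := by
  classical
  let g : M → ℝ := S.piecewise u f
  have hgS {x : M} (hx : x ∈ S) : g x = u x := Set.piecewise_eq_of_mem S u f hx
  have hgf {x : M} (hx : x ∉ S) : g x = f x := Set.piecewise_eq_of_notMem S u f hx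
  have hgh (x : M) : ∀ s ∈ A, |g x - h s| ≤ (1 + ε) * dist x s := by
    intro s hs
    by_cases hx : x ∈ S
    · exact hgS hx ▸ hu.2 s hs x
    · exact hgf hx ▸ hfh s hs x fun hxA => hx (hAS hxA)
  have hmixed {x y : M} (hx : x ∉ closerSet ε A S) (hy : y ∈ S) :
      |g x - g y| ≤ (1 + ε) * (3 + 2 * ε) * dist x y :=
    abs_sub_le_of_notMem_closerSet hA hne hε hx hy (hgh x) (hgh y)
  have hg : ∀ x ∈ S ∪ (closerSet ε A S)ᶜ, ∀ y ∈ S ∪ (closerSet ε A S)ᶜ,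
      |g x - g y| ≤ (1 + ε) * (3 + 2 * ε) * dist x y := by
    intro x hx y hy
    by_cases hxS : x ∈ S <;> by_cases hyS : y ∈ S
    · exact hgS hxS ▸ hgS hyS ▸ hu.1 x y
    · rw [abs_sub_comm, dist_comm]
      exact hmixed (hy.resolve_left hyS) hxS
    · exact hmixed (hx.resolve_left hxS) hyS
    · rw [hgf hxS, hgf hyS]
      exact (hf x y).trans (le_mul_of_one_le_left dist_nonneg (by nlinarith))
  obtain ⟨w, hw, hwg⟩ := exists_mem_anchoredLip_extending hne (hAS.trans Set.subset_union_left)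
    (by positivity) (by nlinarith) hg fun s hs x _ => hgh x s hs
  refine ⟨w, hw, fun x hx => (hwg (.inl hx)).trans (hgS hx), fun x hx => ?_⟩
  rw [Set.mem_compl_iff, Set.mem_union, not_or] at hx
  exact (hwg (.inr hx.2)).trans (hgf hx.1)

end Anchored

section FreeNorm

variable {M : Type*} [MetricSpace M] {z : M} {L θ : ℝ}

lemma freeNorm_eq_sSup_image (z : M) (ν : M →₀ ℝ) :
    freeNorm z ν = sSup (pairing ν '' lipBall z 1) := by
  refine congrArg sSup (Set.ext fun s => ?_)
  simp [mem_lipBall_one, pairing_apply, and_assoc, eq_comm]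

lemma pairing_le_freeNorm (ν : M →₀ ℝ) {f : M → ℝ} (hf : f ∈ lipBall z 1) :
    pairing ν f ≤ freeNorm z ν := by
  rw [freeNorm_eq_sSup_image]
  exact le_csSup ((isCompact_lipBall z 1).bddAbove_image (continuous_pairing ν).continuousOn)
    (Set.mem_image_of_mem _ hf)

lemma exists_lt_pairing_of_lt_freeNorm {ν : M →₀ ℝ} {c : ℝ} (hc : c < freeNorm z ν) :
    ∃ f ∈ lipBall z 1, c < pairing ν f := by
  rw [freeNorm_eq_sSup_image] at hc
  obtain ⟨_, ⟨f, hf, rfl⟩, hcf⟩ := exists_lt_of_lt_csSup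
    (Set.Nonempty.image _ ⟨0, zero_mem_lipBall z zero_le_one⟩) hc
  exact ⟨f, hf, hcf⟩

lemma freeNorm_nonneg (z : M) (ν : M →₀ ℝ) : 0 ≤ freeNorm z ν := by
  simpa using pairing_le_freeNorm ν (zero_mem_lipBall z zero_le_one)

lemma abs_pairing_le_freeNorm (ν : M →₀ ℝ) {f : M → ℝ} (hf : f ∈ lipBall z 1) :
    |pairing ν f| ≤ freeNorm z ν :=
  abs_le'.2 ⟨pairing_le_freeNorm ν hf, by simpa using pairing_le_freeNorm ν (neg_mem_lipBall hf)⟩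

lemma freeNorm_sub_le (z : M) (μ ν : M →₀ ℝ) :
    freeNorm z (μ - ν) ≤ freeNorm z μ + freeNorm z ν := by
  refine le_of_forall_lt_imp_le_of_dense fun c hc => ?_
  obtain ⟨f, hf, hcf⟩ := exists_lt_pairing_of_lt_freeNorm hc
  rw [map_sub, LinearMap.sub_apply] at hcf
  linarith [pairing_le_freeNorm μ hf, neg_le_of_abs_le (abs_pairing_le_freeNorm ν hf)]

lemma pairing_le_mul_freeNorm (ν : M →₀ ℝ) (hL : 0 < L) {f : M → ℝ} (hf : f ∈ lipBall z L) :
    pairing ν f ≤ L * freeNorm z ν :=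
  pairing_le_mul_of_mem_lipBall (fun _ hφ _ => pairing_le_freeNorm ν hφ) hL hf
    (Set.subset_univ _)

lemma sum_abs_mul_le_freeNorm (hθ : 0 < θ) (hd : Pairwise fun x y : M => θ ≤ dist x y) {R : ℝ}
    (hR : 0 < R) (ν : M →₀ ℝ) {g : M → ℝ} (hgz : g z = 0) (hg : ∀ x, g x ∈ Set.Icc 0 R) :
    ∑ x ∈ ν.support, |ν x| * g x ≤ 2 * R / θ * freeNorm z ν := by
  let f : M → ℝ := fun x => SignType.sign (ν x) * g x
  have hf (x : M) : |f x| ≤ R := by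
    rcases lt_trichotomy (ν x) 0 with h | h | h <;>
      simp [f, h, abs_of_nonneg (hg x).1, (hg x).2, hR.le]
  calc ∑ x ∈ ν.support, |ν x| * g x = pairing ν f := by
        simp only [pairing_apply, f, ← mul_assoc, self_mul_sign]
    _ ≤ 2 * R / θ * freeNorm z ν :=
        pairing_le_mul_freeNorm ν (by positivity)
          (mem_lipBall_of_abs_le hθ hd (by simp [f, hgz]) hf)

end FreeNorm

section Ultrafilter

variable {ι : Type*} (U : Ultrafilter ι)

lemma exists_tendsto_of_forall_mem_compact {X : Type*} [TopologicalSpace X] {K : Set X}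
    (hK : IsCompact K) {f : ι → X} (hf : ∀ i, f i ∈ K) : ∃ x ∈ K, Tendsto f U (𝓝 x) :=
  hK.ultrafilter_le_nhds' (U.map f) (Ultrafilter.mem_map.2 (univ_mem' hf))

lemma exists_forall_eventually_le_add {α : Type*} [Nonempty α] {Φ : ι → α → ℝ} {B : ℝ}
    (hΦ : ∀ i a, Φ i a ∈ Set.Icc 0 B) {κ : ℝ} (hκ : 0 < κ) :
    ∃ a, ∀ b, ∀ᶠ i in (U : Filter ι), Φ i a ≤ Φ i b + κ := by
  choose l hl_mem hl using fun a =>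
    exists_tendsto_of_forall_mem_compact U isCompact_Icc (hΦ · a)
  obtain ⟨a, ha⟩ := exists_lt_of_ciInf_lt (lt_add_of_pos_right (⨅ b, l b) hκ)
  have hbdd : BddBelow (Set.range l) := ⟨0, Set.forall_mem_range.2 fun b => (hl_mem b).1⟩
  refine ⟨a, fun b => ?_⟩
  have hlab : l a < l b + κ := ha.trans_le (by gcongr; exact ciInf_le hbdd b)
  exact ((hl a).eventually_lt ((hl b).add_const κ) hlab).mono fun _ => le_of_lt

end Ultrafilter

section Concentration

variable {M ι : Type*} [MetricSpace M] {z : M} {θ C ε η : ℝ} (U : Ultrafilter ι) {ν : ι → M →₀ ℝ}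

/-- Otherwise many functions in disjoint annuli would be almost norming for a common `ν j`, while
their sum is `2`-Lipschitz. -/
lemma exists_radius_pairing_annulus_le (hC : ∀ j, freeNorm z (ν j) ≤ C) (hη : 0 < η) :
    ∃ R, 0 < R ∧ ∀ R', ∀ᶠ j in (U : Filter ι), ∀ φ ∈ lipBall z 1,
      support φ ⊆ (dist · z) ⁻¹' Set.Ioc R R' → pairing (ν j) φ ≤ η := by
  by_contra hcon
  push Not at hcon
  choose! next hnext using hcon
  let R : ℕ → ℝ := fun n => (fun r => max r (next r))^[n] 1
  have hR_succ (n : ℕ) : R (n + 1) = max (R n) (next (R n)) := Function.iterate_succ_apply' _ n 1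
  have hR_mono : Monotone R := monotone_nat_of_le_succ fun n => hR_succ n ▸ le_max_left _ _
  have hR_pos (n : ℕ) : 0 < R n := one_pos.trans_le (hR_mono n.zero_le)
  obtain ⟨T, hT⟩ := exists_nat_gt (2 * C / η)
  rw [div_lt_iff₀ hη] at hT
  obtain ⟨j, hj⟩ := ((Finset.range T).eventually_all (l := (U : Filter ι))).2
    (fun k _ => hnext (R k) (hR_pos k)) |>.exists
  choose! φ hφ hφ_supp hφ_pairing using hj
  have hdisj : ((Finset.range T : Finset ℕ) : Set ℕ).PairwiseDisjoint fun k => support (φ k) := by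
    intro a ha b hb hab
    have hsub {k : ℕ} (hk : k ∈ Finset.range T) :
        support (φ k) ⊆ (dist · z) ⁻¹' Set.Ioc (R k) (R (k + 1)) :=
      (hφ_supp k hk).trans (Set.preimage_mono
        (Set.Ioc_subset_Ioc_right (hR_succ k ▸ le_max_right _ _)))
    exact ((hR_mono.pairwise_disjoint_on_Ioc_succ hab).preimage _).mono (hsub ha) (hsub hb)
  have hupper := pairing_le_mul_freeNorm (ν j) (by norm_num)
    (sum_mem_lipBall_of_pairwiseDisjoint zero_le_one hφ hdisj)
  have hlower : T * η ≤ pairing (ν j) (∑ k ∈ Finset.range T, φ k) := by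
    rw [map_sum]
    simpa using Finset.card_nsmul_le_sum (Finset.range T) _ η fun k hk => (hφ_pairing k hk).le
  linarith [hC j]

/-- The set is chosen to almost minimize the limit along `U` of `∑ x, |ν j x| * min (d(x, S)) R`:
the drop of `d(x, S)` on `closerSet ε S S'` then forces the remaining sum to be small. -/
lemma exists_finset_sum_closerSet_le (hθ : 0 < θ) (hd : Pairwise fun x y : M => θ ≤ dist x y)
    (hC : ∀ j, freeNorm z (ν j) ≤ C) (hε : 0 < ε) (hη : 0 < η) {R : ℝ} (hR : 0 < R) :
    ∃ S : Finset M, z ∈ S ∧ ∀ S' : Finset M, S ⊆ S' → ∀ᶠ j in (U : Filter ι),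
      ∑ x ∈ (ν j).support, |ν j x| *
        (closerSet ε (S : Set M) S' ∩ Metric.closedBall z R).indicator (Metric.infDist · S) x
        ≤ η := by
  let Φ (j : ι) (S : {S : Finset M // z ∈ S}) : ℝ :=
    ∑ x ∈ (ν j).support, |ν j x| * min (Metric.infDist x S) R
  have hΦ (j : ι) (S : {S : Finset M // z ∈ S}) : Φ j S ∈ Set.Icc 0 (2 * R / θ * C) := by
    refine ⟨Finset.sum_nonneg fun x _ => mul_nonneg (abs_nonneg _)
      (le_min Metric.infDist_nonneg hR.le), ?_⟩
    refine (sum_abs_mul_le_freeNorm hθ hd hR (ν j) ?_ fun x => ⟨?_, min_le_right _ _⟩).trans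
      (by gcongr; exact hC j)
    · rw [Metric.infDist_zero_of_mem (Finset.mem_coe.2 S.2), min_eq_left hR.le]
    · exact le_min Metric.infDist_nonneg hR.le
  have : Nonempty {S : Finset M // z ∈ S} := ⟨{z}, Finset.mem_singleton_self z⟩
  obtain ⟨S, hS⟩ := exists_forall_eventually_le_add U hΦ (κ := ε / (1 + ε) * η) (by positivity)
  refine ⟨S, S.2, fun S' hSS' => (hS ⟨S', hSS' S.2⟩).mono fun j hj => ?_⟩
  refine le_of_mul_le_mul_left (?_ : ε / (1 + ε) * _ ≤ _) (by positivity : 0 < ε / (1 + ε))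
  refine le_trans ?_ (sub_le_iff_le_add'.2 hj)
  rw [Finset.mul_sum, ← Finset.sum_sub_distrib]
  refine Finset.sum_le_sum fun x _ => ?_
  rw [mul_left_comm, ← mul_sub]
  exact mul_le_mul_of_nonneg_left (mul_indicator_closerSet_le hε (Finset.mem_coe.2 S.2)
    (Finset.coe_subset.2 hSS') R x) (abs_nonneg _)

lemma exists_finset_pairing_closerSet_le (hθ : 0 < θ)
    (hd : Pairwise fun x y : M => θ ≤ dist x y) (hC : ∀ j, freeNorm z (ν j) ≤ C)
    (hε : 0 < ε) (hη : 0 < η) :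
    ∃ S : Finset M, z ∈ S ∧ ∀ S' : Finset M, S ⊆ S' → ∀ᶠ j in (U : Filter ι),
      ∀ φ ∈ lipBall z 1, support φ ⊆ closerSet ε (S : Set M) S' → pairing (ν j) φ ≤ η := by
  obtain ⟨R, hR, hannulus⟩ := exists_radius_pairing_annulus_le U hC (by positivity : 0 < η / 4)
  obtain ⟨S, hzS, hsum⟩ := exists_finset_sum_closerSet_le U hθ hd hC hε
    (by positivity : 0 < η / 2) (by positivity : 0 < 2 * R)
  refine ⟨S, hzS, fun S' hSS' => ?_⟩
  obtain ⟨R', hR'⟩ := (Metric.isBounded_iff_subset_closedBall z).1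
    (isBounded_closerSet hε hzS (hSS' hzS) S'.finite_toSet.isBounded)
  filter_upwards [hannulus R', hsum S' hSS'] with j hj hsum_j φ hφ hφ_supp
  obtain ⟨g, hg, hg_le, hg_supp, hg_eq⟩ := exists_lipBall_cutoff hR.le hφ
  have hfar : pairing (ν j) g ≤ 2 * (η / 4) := by
    refine pairing_le_mul_of_mem_lipBall hj two_pos hg fun x hx => ?_
    obtain ⟨hxφ, hxR⟩ := hg_supp hx
    exact ⟨not_le.1 hxR, hR' (hφ_supp hxφ)⟩
  have hφ_infDist (x : M) : |φ x| ≤ Metric.infDist x S := by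
    have hφS : ∀ s ∈ (S : Set M), φ s = 0 := fun s hs => notMem_support.1 fun hφs =>
      Set.disjoint_left.1 (disjoint_closerSet hε.le (S : Set M) S') hs (hφ_supp hφs)
    simpa using abs_le_mul_infDist_of_mem_lipBall one_pos hφ ⟨z, hzS⟩ hφS x
  have hnear (x : M) : |(φ - g) x| ≤ (closerSet ε (S : Set M) S' ∩
      Metric.closedBall z (2 * R)).indicator (Metric.infDist · S) x := by
    by_cases hx : x ∈ closerSet ε (S : Set M) S' ∩ Metric.closedBall z (2 * R)
    · rw [Set.indicator_of_mem hx]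
      exact (hg_le x).trans (hφ_infDist x)
    · rw [Set.indicator_of_notMem hx, abs_nonpos_iff, Pi.sub_apply, sub_eq_zero]
      by_cases hxR : x ∈ Metric.closedBall z (2 * R)
      · have hφx : φ x = 0 := notMem_support.1 fun hφx => hx ⟨hφ_supp hφx, hxR⟩
        rw [hφx, eq_comm, ← notMem_support]
        exact fun hgx => (hg_supp hgx).1 hφx
      · exact (hg_eq x hxR).symm
  have := pairing_le_sum_abs_mul (ν j) hnear
  rw [map_sub] at this
  linarith

end Concentration

section Decomposition

variable {M : Type*} [MetricSpace M] {z : M} {θ ε : ℝ}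

lemma exists_eq_add_add_of_close_on_anchor (hθ : 0 < θ)
    (hd : Pairwise fun x y : M => θ ≤ dist x y) (hε : 0 < ε) {A S : Set M} (hA : IsCompact A)
    (hzA : z ∈ A) (hAS : A ⊆ S) {f h u : M → ℝ} (hf : f ∈ lipBall z 1) (hhz : h z = 0)
    (hfh : ∀ s ∈ A, |f s - h s| ≤ ε * θ / 2)
    (hu : u ∈ anchoredLip A h (1 + ε) ((1 + ε) * (3 + 2 * ε))) :
    ∃ w ∈ anchoredLip A h (1 + ε) ((1 + ε) * (3 + 2 * ε)), Set.EqOn w u S ∧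
      ∃ ψ ∈ lipBall z (1 + (1 + ε) * (3 + 2 * ε) + ε), support ψ ⊆ closerSet ε A S ∧
        ∃ e ∈ lipBall z ε, f = w + ψ + e := by
  have hslope : ∀ s ∈ A, ∀ x ∉ A, |f x - h s| ≤ (1 + ε) * dist x s := fun s hs x hx => by
    have hxs : θ ≤ dist x s := hd fun hxs => hx (hxs ▸ hs)
    nlinarith [abs_sub_le (f x) (f s) (h s), hf.2 x s, hfh s hs, dist_nonneg (x := x) (y := s)]
  obtain ⟨w, hw, hwu, hwf⟩ := exists_mem_anchoredLip_eqOn hA ⟨z, hzA⟩ hε.le hAS hu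
    (by simpa using hf.2) hslope
  have hwh : Set.EqOn w h A := eqOn_of_mem_anchoredLip hw
  let e : M → ℝ := A.indicator (f - w)
  have heA {x : M} (hx : x ∈ A) : e x = f x - w x := Set.indicator_of_mem hx _
  have heA' {x : M} (hx : x ∉ A) : e x = 0 := Set.indicator_of_notMem hx _
  have he_le (x : M) : |e x| ≤ ε * θ / 2 := by
    by_cases hx : x ∈ A
    · simpa [heA hx, hwh hx] using hfh x hx
    · rw [heA' hx, abs_zero]
      positivity
  have he : e ∈ lipBall z ε := by
    have := mem_lipBall_of_abs_le hθ hd (by rw [heA hzA, hwh hzA, hf.1, hhz, sub_zero]) he_le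
    rwa [mul_div_cancel₀ _ two_ne_zero, mul_div_cancel_right₀ _ hθ.ne'] at this
  refine ⟨w, hw, hwu, f - w - e, sub_mem_lipBall (sub_mem_lipBall hf
    (anchoredLip_subset_lipBall hzA hhz hw)) he, fun x hx => ?_, e, he, by abel⟩
  have hxA : x ∉ A := fun hxA => hx (by simp [heA hxA])
  by_contra hx_closer
  by_cases hxS : x ∈ S
  · exact hx_closer (diff_subset_closerSet hA.isClosed ⟨z, hzA⟩ ⟨hxS, hxA⟩)
  · exact hx (by simp [heA' hxA, hwf fun hx' => hx'.elim hxS hx_closer])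

end Decomposition

section Core

variable {M : Type*} [MetricSpace M] {z : M} {θ C δ c ε : ℝ} {ν : ℕ → M →₀ ℝ} {f : ℕ → M → ℝ}

lemma le_add_of_eventually_pairing_le (hθ : 0 < θ) (hd : Pairwise fun x y : M => θ ≤ dist x y)
    (hC : ∀ j, freeNorm z (ν j) ≤ C) (hδ : ∀ u ∈ lipBall z 1, ∀ᶠ j in atTop, pairing (ν j) u ≤ δ)
    (hf : ∀ j, f j ∈ lipBall z 1) (hc : ∀ j, c ≤ pairing (ν j) (f j)) (hε : 0 < ε) :
    c ≤ (1 + ε) * (3 + 2 * ε) * δ + (1 + (1 + ε) * (3 + 2 * ε) + ε) * ε + ε * C := by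
  classical
  have hU : (hyperfilter ℕ : Filter ℕ) ≤ atTop := Nat.hyperfilter_le_atTop
  obtain ⟨h, hh, hfh⟩ :=
    exists_tendsto_of_forall_mem_compact (hyperfilter ℕ) (isCompact_lipBall z 1) hf
  obtain ⟨A, hzA, hA⟩ :=
    exists_finset_pairing_closerSet_le (hyperfilter ℕ) hθ hd hC hε hε
  let L : ℝ := (1 + ε) * (3 + 2 * ε)
  have hL : 1 ≤ L := by
    simp only [L]
    nlinarith
  have hK_pairing : ∀ u ∈ anchoredLip A h (1 + ε) L, ∀ᶠ j in atTop, pairing (ν j) u ≤ L * δ := by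
    intro u hu
    have hL0 : 0 < L := one_pos.trans_le hL
    refine (hδ _ (inv_smul_mem_lipBall hL0 (anchoredLip_subset_lipBall hzA hh.1 hu))).mono ?_
    simp [inv_mul_le_iff₀ hL0]
  have hK : IsCompact (anchoredLip A h (1 + ε) L) := isCompact_anchoredLip hzA hh.1
  obtain ⟨u, hu, I, hI⟩ := exists_finset_eventually_pairing_le hK
    ⟨h, mem_anchoredLip_self hh (by linarith) hL⟩ hK_pairing
  have hfh_close : ∀ᶠ j in (hyperfilter ℕ : Filter ℕ), ∀ s ∈ A, |f j s - h s| ≤ ε * θ / 2 := by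
    refine (Finset.eventually_all A).2 fun s _ => ?_
    have := Metric.tendsto_nhds.1 (tendsto_pi_nhds.1 hfh s) (ε * θ / 2) (by positivity)
    exact this.mono fun j hj => hj.le
  obtain ⟨j, hjI, hjA, hj⟩ :=
    ((hI.filter_mono hU).and ((hA (A ∪ I) Finset.subset_union_left).and hfh_close)).exists
  obtain ⟨w, hw, hwu, ψ, hψ, hψ_supp, e, he, hf_eq⟩ := exists_eq_add_add_of_close_on_anchor hθ hd hε
    A.finite_toSet.isCompact hzA (Finset.coe_subset.2 (Finset.subset_union_left (s₂ := I)))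
    (hf j) hh.1 hj hu
  calc c ≤ pairing (ν j) w + pairing (ν j) ψ + pairing (ν j) e := by
        simpa only [hf_eq, map_add] using hc j
    _ ≤ L * δ + (1 + L + ε) * ε + ε * C := by
        gcongr
        · exact hjI w hw fun x hx => hwu (Finset.mem_coe.2 (Finset.mem_union_right A hx))
        · exact pairing_le_mul_of_mem_lipBall hjA (by linarith) hψ hψ_supp
        · exact (pairing_le_mul_freeNorm (ν j) hε he).trans (by gcongr; exact hC j)

lemma le_three_mul_of_eventually_pairing_le (hθ : 0 < θ)
    (hd : Pairwise fun x y : M => θ ≤ dist x y) (hC : ∀ j, freeNorm z (ν j) ≤ C)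
    (hδ : ∀ u ∈ lipBall z 1, ∀ᶠ j in atTop, pairing (ν j) u ≤ δ)
    (hf : ∀ j, f j ∈ lipBall z 1) (hc : ∀ j, c ≤ pairing (ν j) (f j)) : c ≤ 3 * δ := by
  let bound (ε : ℝ) : ℝ :=
    (1 + ε) * (3 + 2 * ε) * δ + (1 + (1 + ε) * (3 + 2 * ε) + ε) * ε + ε * C
  have hlim : Tendsto bound (𝓝[>] 0) (𝓝 (3 * δ)) := by
    have hcont : Continuous bound := by fun_prop
    simpa [bound] using (hcont.tendsto 0).mono_left nhdsWithin_le_nhds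
  exact ge_of_tendsto hlim (eventually_mem_nhdsWithin.mono fun ε hε =>
    le_add_of_eventually_pairing_le hθ hd hC hδ hf hc hε)

end Core

section TailOsc

variable {d : ℕ → ℕ → ℝ} {B c : ℝ}

/-- The values `d k l` with `k, l ≥ n`. -/
def tailValues (d : ℕ → ℕ → ℝ) (n : ℕ) : Set ℝ :=
  {s | ∃ k, n ≤ k ∧ ∃ l, n ≤ l ∧ s = d k l}

/-- `inf_n sup {d k l : k, l ≥ n}`, the common shape of `seqCa` and `seqDe`. It is meaningful only
for bounded `d`, as `sSup` of an unbounded set is `0`. -/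
noncomputable def tailOsc (d : ℕ → ℕ → ℝ) : ℝ :=
  ⨅ n, sSup (tailValues d n)

lemma tailValues_nonempty (d : ℕ → ℕ → ℝ) (n : ℕ) : (tailValues d n).Nonempty :=
  ⟨d n n, n, le_rfl, n, le_rfl, rfl⟩

lemma tailOsc_le_sSup_tailValues (hd : ∀ k l, 0 ≤ d k l) (n : ℕ) :
    tailOsc d ≤ sSup (tailValues d n) := by
  refine ciInf_le ⟨0, Set.forall_mem_range.2 fun m => Real.sSup_nonneg ?_⟩ n
  rintro _ ⟨k, _, l, _, rfl⟩
  exact hd k l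

lemma exists_lt_of_lt_tailOsc (hd : ∀ k l, 0 ≤ d k l) (hc : c < tailOsc d) (n : ℕ) :
    ∃ k, n ≤ k ∧ ∃ l, n ≤ l ∧ c < d k l := by
  obtain ⟨_, ⟨k, hk, l, hl, rfl⟩, hckl⟩ := exists_lt_of_lt_csSup (tailValues_nonempty d n)
    (hc.trans_le (tailOsc_le_sSup_tailValues hd n))
  exact ⟨k, hk, l, hl, hckl⟩

lemma exists_forall_lt_of_tailOsc_lt (hB : ∀ k l, d k l ≤ B) (hc : tailOsc d < c) :
    ∃ n, ∀ k ≥ n, ∀ l ≥ n, d k l < c := by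
  obtain ⟨n, hn⟩ := exists_lt_of_ciInf_lt hc
  have hbdd : BddAbove (tailValues d n) := by
    refine ⟨B, ?_⟩
    rintro _ ⟨k, _, l, _, rfl⟩
    exact hB k l
  exact ⟨n, fun k hk l hl => (le_csSup hbdd ⟨k, hk, l, hl, rfl⟩).trans_lt hn⟩

lemma tailOsc_le (hd : ∀ k l, d k l ∈ Set.Icc 0 B) : tailOsc d ≤ B := by
  refine (tailOsc_le_sSup_tailValues (fun k l => (hd k l).1) 0).trans
    (csSup_le (tailValues_nonempty d 0) ?_)
  rintro _ ⟨k, _, l, _, rfl⟩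
  exact (hd k l).2

lemma tailOsc_eq_sInf (d : ℕ → ℕ → ℝ) :
    tailOsc d = sInf {t | ∃ n, t = sSup {s | ∃ k, n ≤ k ∧ ∃ l, n ≤ l ∧ s = d k l}} := by
  simp only [tailOsc, iInf, Set.range, tailValues, eq_comm]

variable {M : Type*} [MetricSpace M] {z : M} {μ : ℕ → M →₀ ℝ} {C : ℝ}

lemma seqCa_eq_tailOsc (z : M) (μ : ℕ → M →₀ ℝ) :
    seqCa z μ = tailOsc fun k l => freeNorm z (μ k - μ l) :=
  (tailOsc_eq_sInf _).symm

lemma seqDe_eq_sSup_image (z : M) (μ : ℕ → M →₀ ℝ) :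
    seqDe z μ = sSup ((fun f => tailOsc fun k l => |pairing (μ k - μ l) f|) '' lipBall z 1) := by
  refine congrArg sSup (Set.ext fun s => ?_)
  simp only [Set.mem_image, mem_lipBall_one, pairing_apply, tailOsc_eq_sInf, and_assoc,
    Set.mem_ofPred_eq, eq_comm]

lemma tailOsc_pairing_le_seqDe (hC : ∀ k l, freeNorm z (μ k - μ l) ≤ C) {f : M → ℝ}
    (hf : f ∈ lipBall z 1) : (tailOsc fun k l => |pairing (μ k - μ l) f|) ≤ seqDe z μ := by
  rw [seqDe_eq_sSup_image]
  refine le_csSup ⟨C, Set.forall_mem_image.2 fun g hg => tailOsc_le fun k l => ?_⟩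
    (Set.mem_image_of_mem _ hf)
  exact ⟨abs_nonneg _, (abs_pairing_le_freeNorm _ hg).trans (hC k l)⟩

end TailOsc

/-- The Lipschitz-free space over a uniformly discrete metric space is `3`-Schur. -/
theorem freeSpace_three_schur_of_uniformlyDiscrete
    {M : Type*} [MetricSpace M] (z : M)
    (hud : ∃ θ : ℝ, 0 < θ ∧ ∀ x y : M, x ≠ y → θ ≤ dist x y)
    (μ : ℕ → M →₀ ℝ) (hbdd : ∃ C : ℝ, ∀ n, freeNorm z (μ n) ≤ C) :
    seqCa z μ ≤ 3 * seqDe z μ := by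
  obtain ⟨θ, hθ, hd⟩ := hud
  obtain ⟨C, hC⟩ := hbdd
  have hC_sub (k l : ℕ) : freeNorm z (μ k - μ l) ≤ C + C :=
    (freeNorm_sub_le z _ _).trans (add_le_add (hC k) (hC l))
  refine le_of_forall_lt_imp_le_of_dense fun c hc => ?_
  rw [seqCa_eq_tailOsc] at hc
  choose k hk l hl hkl using exists_lt_of_lt_tailOsc (fun _ _ => freeNorm_nonneg z _) hc
  choose f hf hcf using fun n => exists_lt_pairing_of_lt_freeNorm (hkl n)
  refine (div_le_iff₀' three_pos).1 (le_of_forall_gt_imp_ge_of_dense fun δ hδ => ?_)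
  refine (div_le_iff₀' three_pos).2 (le_three_mul_of_eventually_pairing_le hθ (fun x y => hd x y)
    (fun n => hC_sub (k n) (l n)) (fun u hu => ?_) hf fun n => (hcf n).le)
  obtain ⟨N, hN⟩ := exists_forall_lt_of_tailOsc_lt
    (fun k l => (abs_pairing_le_freeNorm _ hu).trans (hC_sub k l))
    ((tailOsc_pairing_le_seqDe hC_sub hu).trans_lt hδ)
  filter_upwards [eventually_ge_atTop N] with n hn
  exact (le_abs_self _).trans (hN _ (hn.trans (hk n)) _ (hn.trans (hl n))).le
end

section
/- Let X be a real Banach space and let c ≥ 1. Then X has the c-strong Schur property if and only if wca(x_n) ≤ c·de(x_n) for every bounded sequence (x_n) in X. -/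
open scoped BigOperators
open Filter

/-- `ca` of a real sequence: `inf_n sup {|t_k - t_l| : k, l ≥ n}`. -/
noncomputable def caSeqR (t : ℕ → ℝ) : ℝ :=
  sInf {s | ∃ n : ℕ, s = sSup {u | ∃ k, n ≤ k ∧ ∃ l, n ≤ l ∧ u = |t k - t l|}}

/-- `ca` of a sequence in a normed space: `inf_n diam {x_k : k ≥ n}`. -/
noncomputable def caSeq {X : Type*} [NormedAddCommGroup X] (x : ℕ → X) : ℝ :=
  sInf {s | ∃ n : ℕ, s = Metric.diam (x '' Set.Ici n)}

/-- `de` of a sequence: `sup {ca((x*(x_n))_n) : x* ∈ B_{X*}}`. -/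
noncomputable def deSeq {X : Type*} [NormedAddCommGroup X] [NormedSpace ℝ X]
    (x : ℕ → X) : ℝ :=
  sSup {t | ∃ φ : X →L[ℝ] ℝ, ‖φ‖ ≤ 1 ∧ t = caSeqR fun n => φ (x n)}

/-- `wca(x_n) = inf {ca((x_{n_k})_k) : (n_k) strictly increasing}`. -/
noncomputable def wcaSeq {X : Type*} [NormedAddCommGroup X] (x : ℕ → X) : ℝ :=
  sInf {t | ∃ n : ℕ → ℕ, StrictMono n ∧ t = caSeq (x ∘ n)}

/-- `wde(x_n) = inf {de((x_{n_k})_k) : (n_k) strictly increasing}`. -/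
noncomputable def wdeSeq {X : Type*} [NormedAddCommGroup X] [NormedSpace ℝ X]
    (x : ℕ → X) : ℝ :=
  sInf {t | ∃ n : ℕ → ℕ, StrictMono n ∧ t = deSeq (x ∘ n)}

/-- A real normed space is `c`-Schur if `ca(x_n) ≤ c · de(x_n)` for every bounded
sequence `(x_n)`. -/
def IsCSchur (X : Type*) [NormedAddCommGroup X] [NormedSpace ℝ X] (c : ℝ) : Prop :=
  ∀ x : ℕ → X, (∃ C : ℝ, ∀ n, ‖x n‖ ≤ C) → caSeq x ≤ c * deSeq x

/-- A real normed space has the `c`-strong Schur property if every normalized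
`δ`-separated sequence admits a subsequence `(2c/δ + ε)`-equivalent to the unit
vector basis of `ℓ¹`. -/
def HasCStrongSchur (X : Type*) [NormedAddCommGroup X] [NormedSpace ℝ X] (c : ℝ) : Prop :=
  ∀ δ : ℝ, 0 < δ → δ ≤ 2 → ∀ ε : ℝ, 0 < ε → ∀ x : ℕ → X,
    (∀ n, ‖x n‖ = 1) → (∀ n m, n ≠ m → δ ≤ ‖x n - x m‖) →
    ∃ n : ℕ → ℕ, StrictMono n ∧ ∀ (N : ℕ) (a : ℕ → ℝ),
      (2 * c / δ + ε)⁻¹ * ∑ k ∈ Finset.range N, |a k| ≤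
        ‖∑ k ∈ Finset.range N, a k • x (n k)‖

/-!
Hahn–Banach turns a lower `ℓ¹`-estimate with constant `κ` for a sequence into a functional of norm
at most `1` taking the values `±κ` alternately along it, hence into a lower bound for `de`. Applied
to the normalization of a separated subsequence (found by Ramsey's theorem) of `(x_n)` this bounds
`wca` by `c · de`.

The converse is the quantitative form of Rosenthal's `ℓ¹`-theorem: if `2 κ < wde(x_n)`, then some
subsequence has a lower `ℓ¹`-estimate with constant `κ`. A functional with oscillation larger than
`2 κ` along a subsequence of `(x_n)` crosses, infinitely often in both directions, one of finitely
many gaps of width `2 κ`. Rosenthal's combinatorial argument then produces a single gap and a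
subsequence for which every finite pattern of positions below and above the gap is realized by a
functional in the unit ball, and evaluating at two opposite patterns yields the estimate.
-/

section Subsequences

theorem exists_strictMono_of_eventually_eventually {l : Filter ℕ} [l.NeBot] (hl : l ≤ atTop)
    {r : ℕ → ℕ → Prop} (h : ∀ᶠ i in l, ∀ᶠ j in l, r i j) :
    ∃ n : ℕ → ℕ, StrictMono n ∧ ∀ i j, i < j → r (n i) (n j) := by
  obtain ⟨n, -, hn⟩ := exists_seq_of_forall_finset_exists (fun i => ∀ᶠ j in l, r i j)
    (fun i j => i < j ∧ r i j) fun s hs => by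
      have hnext : ∀ᶠ j in l, ∀ i ∈ s, i < j ∧ r i j :=
        (eventually_all_finset s).2 fun i hi =>
          ((eventually_gt_atTop i).filter_mono hl).and (hs i hi)
      exact (h.and hnext).exists
  exact ⟨n, fun i j hij => (hn i j hij).1, fun i j hij => (hn i j hij).2⟩

/-- Ramsey's theorem for pairs; the colour is selected by a free ultrafilter. -/
theorem exists_strictMono_forall_lt_or_forall_lt_not (r : ℕ → ℕ → Prop) :
    ∃ n : ℕ → ℕ, StrictMono n ∧
      ((∀ i j, i < j → r (n i) (n j)) ∨ ∀ i j, i < j → ¬ r (n i) (n j)) := by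
  by_cases h : ∀ᶠ i in (hyperfilter ℕ : Filter ℕ), ∀ᶠ j in (hyperfilter ℕ : Filter ℕ), r i j
  · obtain ⟨n, hn, hr⟩ := exists_strictMono_of_eventually_eventually Nat.hyperfilter_le_atTop h
    exact ⟨n, hn, Or.inl hr⟩
  · simp only [← Ultrafilter.eventually_not] at h
    obtain ⟨n, hn, hr⟩ := exists_strictMono_of_eventually_eventually Nat.hyperfilter_le_atTop h
    exact ⟨n, hn, Or.inr hr⟩

theorem exists_strictMono_diagonal {α : Type*} (A : α → Set ℕ) {R : α → ℕ → α → Prop}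
    (h : ∀ p, ∃ j ∈ A p, ∃ q, A q ⊆ A p ∩ Set.Ioi j ∧ R p j q) (p₀ : α) :
    ∃ (p : ℕ → α) (j : ℕ → ℕ), p 0 = p₀ ∧ StrictMono j ∧ (∀ k l, k ≤ l → j l ∈ A (p k)) ∧
      ∀ k, R (p k) (j k) (p (k + 1)) := by
  choose J hJ next hnext hR using h
  let p : ℕ → α := fun k => next^[k] p₀
  have hp (k : ℕ) : p (k + 1) = next (p k) := Function.iterate_succ_apply' next k p₀
  have hsub (k : ℕ) : A (p (k + 1)) ⊆ A (p k) ∩ Set.Ioi (J (p k)) := hp k ▸ hnext (p k)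
  have hanti : Antitone fun k => A (p k) :=
    antitone_nat_of_succ_le fun k => (hsub k).trans Set.inter_subset_left
  exact ⟨p, fun k => J (p k), rfl, strictMono_nat_of_lt_succ fun k => (hsub k (hJ _)).2,
    fun k l hkl => hanti hkl (hJ _), fun k => hp k ▸ hR (p k)⟩

end Subsequences

section Rosenthal

variable {S β ι : Type*}

/-- Hereditary oscillation: every subsequence indexed in `M` is met infinitely often, in every
colour `b`, by some point of `D`. For `β = Bool` this says that no subsequence indexed in `M` of the
pairs of sets `(E false n, E true n)` converges on `D` in the sense of Rosenthal. -/
def OscillatesOn (E : β → ℕ → Set S) (D : Set S) (M : Set ℕ) : Prop :=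
  ∀ N ⊆ M, N.Infinite → ∃ s ∈ D, ∀ b, {n ∈ N | s ∈ E b n}.Infinite

/-- If no `j` worked, a diagonal sequence `j k` would fail at cells `D ∩ E b (j k)` with the same
`D` and `b` for infinitely many `k`, and `D` could not oscillate along these `j k`. -/
theorem exists_oscillatesOn_inter [Finite β] {E : β → ℕ → Set S} {F : Set (Set S)} (hF : F.Finite)
    {M : Set ℕ} (hM : M.Infinite) (h : ∀ D ∈ F, OscillatesOn E D M) :
    ∃ j ∈ M, ∃ N ⊆ M ∩ Set.Ioi j, N.Infinite ∧
      ∀ D ∈ F, ∀ b, OscillatesOn E (D ∩ E b j) N := by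
  by_contra hcon
  let Converges (D : Set S) (N : Set ℕ) : Prop := ∀ s ∈ D, ∃ b, {n ∈ N | s ∈ E b n}.Finite
  have hbad (N : {N : Set ℕ // N ⊆ M ∧ N.Infinite}) : ∃ j ∈ N.1,
      ∃ N' : {N : Set ℕ // N ⊆ M ∧ N.Infinite}, N'.1 ⊆ N.1 ∩ Set.Ioi j ∧
        ∃ y : F × β, Converges (y.1 ∩ E y.2 j) N'.1 := by
    obtain ⟨N, hNM, hN⟩ := N
    obtain ⟨j, hj⟩ := hN.nonempty
    have htail : (N ∩ Set.Ioi j).Infinite := by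
      simpa only [Set.sdiff_eq, Set.compl_Iic] using hN.sdiff (Set.finite_Iic j)
    by_contra hno
    refine hcon ⟨j, hNM hj, N ∩ Set.Ioi j, by gcongr, htail, fun D hD b N' hN' hN'inf => ?_⟩
    by_contra! hconv
    refine hno ⟨j, hj, ⟨N', hN'.trans (Set.inter_subset_left.trans hNM), hN'inf⟩, hN',
      (⟨D, hD⟩, b), fun s hs => ?_⟩
    simpa only [Set.not_infinite] using hconv s hs
  obtain ⟨N, j, -, hj, hjN, hconv⟩ :=
    exists_strictMono_diagonal Subtype.val hbad ⟨M, subset_rfl, hM⟩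
  choose y hy using hconv
  have : Finite F := hF
  obtain ⟨⟨D, b⟩, hinf⟩ := Finite.exists_infinite_fiber y
  obtain ⟨s, hsD, hs⟩ := h D D.2 (j '' (y ⁻¹' {(D, b)}))
    (by rintro _ ⟨k, -, rfl⟩; exact (N k).2.1 (hjN k k le_rfl))
    ((Set.infinite_coe_iff.1 hinf).image hj.injective.injOn)
  obtain ⟨_, ⟨k, hk, rfl⟩, hsk⟩ := (hs b).nonempty
  have hk : y k = (D, b) := hk
  obtain ⟨b', hfin⟩ := hy k s (by simpa only [hk] using ⟨hsD, hsk⟩)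
  refine hs b' ((hfin.union ((Set.finite_Iic k).image j)).subset ?_)
  rintro _ ⟨⟨i, -, rfl⟩, hsi⟩
  rcases lt_or_ge k i with hki | hik
  · exact Or.inl ⟨hjN (k + 1) i hki, hsi⟩
  · exact Or.inr ⟨i, hik, rfl⟩

/-- Rosenthal's combinatorial theorem. A stage of the diagonal construction consists of the cells
cut out of `D` so far and an infinite index set on which all of them still oscillate. -/
theorem OscillatesOn.exists_strictMono_independent [Finite β] {E : β → ℕ → Set S} {D : Set S}
    {M : Set ℕ} (h : OscillatesOn E D M) (hM : M.Infinite) :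
    ∃ n : ℕ → ℕ, StrictMono n ∧ ∀ (σ : ℕ → β) (K : ℕ), ∃ s ∈ D, ∀ k < K, s ∈ E (σ k) (n k) := by
  let State := {p : Set (Set S) × Set ℕ //
    p.1.Finite ∧ p.2.Infinite ∧ ∀ D ∈ p.1, OscillatesOn E D p.2}
  have hnext (p : State) : ∃ j ∈ p.1.2, ∃ q : State, q.1.2 ⊆ p.1.2 ∩ Set.Ioi j ∧
      ∀ D ∈ p.1.1, ∀ b, D ∩ E b j ∈ q.1.1 := by
    obtain ⟨⟨F, M⟩, hF, hM, hosc⟩ := p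
    obtain ⟨j, hj, N, hNM, hN, hoscN⟩ := exists_oscillatesOn_inter hF hM hosc
    exact ⟨j, hj, ⟨(Set.image2 (fun D b => D ∩ E b j) F Set.univ, N),
      hF.image2 _ Set.finite_univ, hN, Set.forall_mem_image2.2 fun D hD b _ => hoscN D hD b⟩, hNM,
      fun D hD b => Set.mem_image2_of_mem hD (Set.mem_univ b)⟩
  obtain ⟨p, n, hp0, hn, -, hcells⟩ := exists_strictMono_diagonal (fun p : State => p.1.2) hnext
    ⟨({D}, M), Set.finite_singleton D, hM, by simpa using h⟩
  refine ⟨n, hn, fun σ K => ?_⟩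
  have hcell : D ∩ {s | ∀ k < K, s ∈ E (σ k) (n k)} ∈ (p K).1.1 := by
    induction K with
    | zero => simp [hp0]
    | succ K ih =>
      convert hcells K _ ih (σ K) using 1
      ext s
      simp only [Set.mem_inter_iff, Set.mem_ofPred_eq, Nat.forall_lt_succ_right, and_assoc]
  obtain ⟨s, hs, -⟩ := (p K).2.2.2 _ hcell _ subset_rfl (p K).2.2.1
  exact ⟨s, hs⟩

theorem exists_oscillatesOn_of_finite {E : ι → β → ℕ → Set S} {D : Set S} {I : Set ι}
    (hI : I.Finite) {M : Set ℕ} (hM : M.Infinite)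
    (h : ∀ N ⊆ M, N.Infinite → ∃ i ∈ I, ∃ s ∈ D, ∀ b, {n ∈ N | s ∈ E i b n}.Infinite) :
    ∃ i ∈ I, ∃ N : Set ℕ, N.Infinite ∧ OscillatesOn (E i) D N := by
  induction I, hI using Set.Finite.induction_on generalizing M with
  | empty => simpa using h M subset_rfl hM
  | @insert i I _ _ ih =>
    by_cases hi : OscillatesOn (E i) D M
    · exact ⟨i, Set.mem_insert i I, M, hM, hi⟩
    · simp only [OscillatesOn, not_forall] at hi
      obtain ⟨N, hNM, hN, hno⟩ := hi
      obtain ⟨i', hi', hosc⟩ := ih hN fun N' hN' hN'inf => by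
        obtain ⟨i', rfl | hi', s, hsD, hs⟩ := h N' (hN'.trans hNM) hN'inf
        · exact absurd ⟨s, hsD, fun b => (hs b).mono fun n hn => ⟨hN' hn.1, hn.2⟩⟩ hno
        · exact ⟨i', hi', s, hsD, hs⟩
      exact ⟨i', Set.mem_insert_of_mem i hi', hosc⟩

end Rosenthal

section RealSequences

variable {t : ℕ → ℝ} {C β γ : ℝ}

theorem sSup_abs_sub_nonneg (t : ℕ → ℝ) (n : ℕ) :
    0 ≤ sSup {u | ∃ k, n ≤ k ∧ ∃ l, n ≤ l ∧ u = |t k - t l|} := by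
  refine Real.sSup_nonneg ?_
  rintro _ ⟨k, -, l, -, rfl⟩
  exact abs_nonneg _

theorem caSeqR_nonneg (t : ℕ → ℝ) : 0 ≤ caSeqR t := by
  refine Real.sInf_nonneg ?_
  rintro _ ⟨n, rfl⟩
  exact sSup_abs_sub_nonneg t n

theorem caSeqR_le_sSup (t : ℕ → ℝ) (n : ℕ) :
    caSeqR t ≤ sSup {u | ∃ k, n ≤ k ∧ ∃ l, n ≤ l ∧ u = |t k - t l|} := by
  refine csInf_le ⟨0, ?_⟩ ⟨n, rfl⟩
  rintro _ ⟨m, rfl⟩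
  exact sSup_abs_sub_nonneg t m

theorem frequently_lt_sub_of_lt_caSeqR (h : β < caSeqR t) :
    ∃ᶠ p : ℕ × ℕ in atTop ×ˢ atTop, β < t p.1 - t p.2 := by
  rw [prod_atTop_atTop_eq, frequently_atTop]
  rintro ⟨m, n⟩
  obtain ⟨_, ⟨k, hk, l, hl, rfl⟩, hkl⟩ := exists_lt_of_lt_csSup
    (by exact ⟨_, max m n, le_rfl, max m n, le_rfl, rfl⟩)
    (h.trans_le (caSeqR_le_sSup t (max m n)))
  rw [max_le_iff] at hk hl
  rcases lt_abs.1 hkl with hkl | hkl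
  · exact ⟨(k, l), ⟨hk.1, hl.2⟩, hkl⟩
  · exact ⟨(l, k), ⟨hl.1, hk.2⟩, by simpa only [neg_sub] using hkl⟩

theorem caSeqR_le (ht : ∀ n, |t n| ≤ C) : caSeqR t ≤ 2 * C := by
  by_contra! h
  obtain ⟨⟨k, l⟩, hkl⟩ := (frequently_lt_sub_of_lt_caSeqR h).exists
  linarith [(abs_le.1 (ht k)).2, (abs_le.1 (ht l)).1]

theorem abs_sub_le_caSeqR (ht : ∀ n, |t n| ≤ C) {u v : ℕ → ℕ} (hu : Tendsto u atTop atTop)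
    (hv : Tendsto v atTop atTop) {a b : ℝ} (hta : Tendsto (fun k => t (u k)) atTop (nhds a))
    (htb : Tendsto (fun k => t (v k)) atTop (nhds b)) : |a - b| ≤ caSeqR t := by
  refine le_csInf ⟨_, 0, rfl⟩ ?_
  rintro _ ⟨n, rfl⟩
  have hbdd : BddAbove {d | ∃ k, n ≤ k ∧ ∃ l, n ≤ l ∧ d = |t k - t l|} := by
    refine ⟨2 * C, ?_⟩
    rintro _ ⟨k, -, l, -, rfl⟩
    linarith [abs_sub (t k) (t l), ht k, ht l]
  refine le_of_tendsto (hta.sub htb).abs ?_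
  filter_upwards [hu.eventually_ge_atTop n, hv.eventually_ge_atTop n] with k hku hkv
  exact le_csSup hbdd ⟨u k, hku, v k, hkv, rfl⟩

theorem exists_finite_crossing_of_lt_caSeqR (C : ℝ) (h : γ < β) :
    ∃ I : Set ℝ, I.Finite ∧ ∀ t : ℕ → ℝ, (∀ n, |t n| ≤ C) → β < caSeqR t →
      ∃ a ∈ I, (∃ᶠ n in atTop, t n < a) ∧ ∃ᶠ n in atTop, a + γ < t n := by
  have hη : 0 < (β - γ) / 2 := by linarith
  obtain ⟨Z, -, hZ, hcover⟩ := (isCompact_Icc (a := -C) (b := C)).finite_cover_balls hη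
  refine ⟨(· + (β - γ) / 2) '' Z, hZ.image _, fun t ht hca => ?_⟩
  have hcross : ∃ᶠ p : ℕ × ℕ in atTop ×ˢ atTop,
      ∃ z ∈ Z, t p.2 < z + (β - γ) / 2 ∧ z + (β - γ) / 2 + γ < t p.1 := by
    refine (frequently_lt_sub_of_lt_caSeqR hca).mono fun p hp => ?_
    obtain ⟨z, hz, hdist⟩ := Set.mem_iUnion₂.1 (hcover (abs_le.1 (ht p.2)))
    rw [Metric.mem_ball, Real.dist_eq, abs_lt] at hdist
    exact ⟨z, hz, by linarith, by linarith⟩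
  obtain ⟨z, hz, hfreq⟩ : ∃ z ∈ Z, ∃ᶠ p : ℕ × ℕ in atTop ×ˢ atTop,
      t p.2 < z + (β - γ) / 2 ∧ z + (β - γ) / 2 + γ < t p.1 := by
    by_contra! hno
    refine hcross ?_
    filter_upwards [(eventually_all_finite hZ).2 hno] with p hp
    simpa using hp
  exact ⟨_, Set.mem_image_of_mem _ hz, tendsto_snd.frequently (hfreq.mono fun _ hp => hp.1),
    tendsto_fst.frequently (hfreq.mono fun _ hp => hp.2)⟩

end RealSequences

section NormedGroup

variable {X : Type*} [NormedAddCommGroup X] {x : ℕ → X} {C α : ℝ}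

theorem caSeq_nonneg (x : ℕ → X) : 0 ≤ caSeq x := by
  refine Real.sInf_nonneg ?_
  rintro _ ⟨n, rfl⟩
  exact Metric.diam_nonneg

theorem caSeq_le_of_forall_lt (hα : 0 ≤ α) (h : ∀ m n, m < n → ‖x m - x n‖ ≤ α) :
    caSeq x ≤ α := by
  have hbdd : BddBelow {s | ∃ n : ℕ, s = Metric.diam (x '' Set.Ici n)} := by
    refine ⟨0, ?_⟩
    rintro _ ⟨n, rfl⟩
    exact Metric.diam_nonneg
  refine (csInf_le hbdd ⟨0, rfl⟩).trans (Metric.diam_le_of_forall_dist_le hα ?_)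
  rintro _ ⟨m, -, rfl⟩ _ ⟨n, -, rfl⟩
  rcases lt_trichotomy m n with hmn | rfl | hnm
  · exact dist_eq_norm (x m) (x n) ▸ h m n hmn
  · simpa using hα
  · exact dist_eq_norm' (x m) (x n) ▸ h n m hnm

theorem bddBelow_caSeq_comp (x : ℕ → X) :
    BddBelow {t | ∃ n : ℕ → ℕ, StrictMono n ∧ t = caSeq (x ∘ n)} := by
  refine ⟨0, ?_⟩
  rintro _ ⟨n, -, rfl⟩
  exact caSeq_nonneg _

theorem wcaSeq_le_caSeq_comp (x : ℕ → X) {n : ℕ → ℕ} (hn : StrictMono n) :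
    wcaSeq x ≤ caSeq (x ∘ n) :=
  csInf_le (bddBelow_caSeq_comp x) ⟨n, hn, rfl⟩

theorem wcaSeq_le_wcaSeq_comp (x : ℕ → X) {n : ℕ → ℕ} (hn : StrictMono n) :
    wcaSeq x ≤ wcaSeq (x ∘ n) := by
  refine csInf_le_csInf (bddBelow_caSeq_comp x) ⟨_, id, strictMono_id, rfl⟩ ?_
  rintro _ ⟨m, hm, rfl⟩
  exact ⟨n ∘ m, hn.comp hm, rfl⟩

theorem le_wcaSeq (hC : ∀ n, ‖x n‖ ≤ C) (hsep : Pairwise fun m n => α ≤ ‖x m - x n‖) :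
    α ≤ wcaSeq x := by
  refine le_csInf ⟨_, id, strictMono_id, rfl⟩ ?_
  rintro _ ⟨n, hn, rfl⟩
  refine le_csInf ⟨_, 0, rfl⟩ ?_
  rintro _ ⟨k, rfl⟩
  have hbdd : Bornology.IsBounded ((x ∘ n) '' Set.Ici k) :=
    isBounded_iff_forall_norm_le.2 ⟨C, by rintro _ ⟨i, -, rfl⟩; exact hC _⟩
  calc α ≤ ‖x (n k) - x (n (k + 1))‖ := hsep (hn k.lt_succ_self).ne
    _ = dist (x (n k)) (x (n (k + 1))) := (dist_eq_norm _ _).symm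
    _ ≤ _ := Metric.dist_le_diam_of_mem hbdd ⟨k, Set.self_mem_Ici, rfl⟩ ⟨k + 1, k.le_succ, rfl⟩

theorem le_two_mul_of_tendsto_norm {r : ℝ} (hx : Tendsto (fun k => ‖x k‖) atTop (nhds r))
    (hsep : Pairwise fun k l => α ≤ ‖x k - x l‖) : α ≤ 2 * r := by
  rw [two_mul]
  exact ge_of_tendsto' (hx.add (hx.comp (tendsto_add_atTop_nat 1))) fun k =>
    (hsep k.succ_ne_self.symm).trans (norm_sub_le _ _)

theorem exists_separated_subseq_of_lt_wcaSeq (hα : 0 ≤ α) (h : α < wcaSeq x) :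
    ∃ n : ℕ → ℕ, StrictMono n ∧ Pairwise fun k l => α ≤ ‖x (n k) - x (n l)‖ := by
  obtain ⟨n, hn, hsep | hclose⟩ :=
    exists_strictMono_forall_lt_or_forall_lt_not fun k l => α ≤ ‖x k - x l‖
  · refine ⟨n, hn, fun k l hkl => ?_⟩
    rcases hkl.lt_or_gt with hkl | hlk
    · exact hsep k l hkl
    · exact norm_sub_rev (x (n l)) (x (n k)) ▸ hsep l k hlk
  · have hle : caSeq (x ∘ n) ≤ α :=
      caSeq_le_of_forall_lt hα fun k l hkl => (not_le.1 (hclose k l hkl)).le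
    exact absurd ((wcaSeq_le_caSeq_comp x hn).trans hle) h.not_ge

theorem exists_separated_subseq_tendsto_norm (hC : ∀ n, ‖x n‖ ≤ C) (hα : 0 ≤ α)
    (h : α < wcaSeq x) :
    ∃ n : ℕ → ℕ, StrictMono n ∧ (Pairwise fun k l => α ≤ ‖x (n k) - x (n l)‖) ∧
      ∃ r, Tendsto (fun k => ‖x (n k)‖) atTop (nhds r) := by
  obtain ⟨n, hn, hsep⟩ := exists_separated_subseq_of_lt_wcaSeq hα h
  obtain ⟨r, -, m, hm, hr⟩ := (isCompact_Icc (a := 0) (b := C)).tendsto_subseq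
    fun k => ⟨norm_nonneg (x (n k)), hC (n k)⟩
  exact ⟨n ∘ m, hn.comp hm, hsep.comp_of_injective hm.injective, r, hr⟩

end NormedGroup

section HahnBanach

/-- Hahn–Banach extension from the range of `L`, on which `g` factors by the norm bound. -/
theorem exists_norm_le_one_comp_eq {𝕜 E X : Type*} [RCLike 𝕜] [AddCommGroup E] [Module 𝕜 E]
    [SeminormedAddCommGroup X] [NormedSpace 𝕜 X] (L : E →ₗ[𝕜] X) (g : E →ₗ[𝕜] 𝕜)
    (h : ∀ a, ‖g a‖ ≤ ‖L a‖) : ∃ φ : X →L[𝕜] 𝕜, ‖φ‖ ≤ 1 ∧ ∀ a, φ (L a) = g a := by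
  have hker : g ∈ (LinearMap.ker L.rangeRestrict).dualAnnihilator := by
    rw [Submodule.mem_dualAnnihilator, LinearMap.ker_rangeRestrict]
    intro a ha
    simpa [LinearMap.mem_ker.1 ha] using h a
  rw [← LinearMap.range_dualMap_eq_dualAnnihilator_ker] at hker
  obtain ⟨f, rfl⟩ := hker
  have hf : ∀ v, ‖f v‖ ≤ 1 * ‖v‖ := by
    rintro ⟨_, a, rfl⟩
    rw [one_mul]
    exact h a
  obtain ⟨φ, hφ, hnorm⟩ := exists_extension_norm_eq _ (f.mkContinuous 1 hf)
  exact ⟨φ, hnorm.trans_le (f.mkContinuous_norm_le zero_le_one hf),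
    fun a => hφ (L.rangeRestrict a)⟩

end HahnBanach

section NormedSpace

variable {X : Type*} [NormedAddCommGroup X] [NormedSpace ℝ X] {x y : ℕ → X} {C c κ : ℝ}

theorem abs_apply_le_of_norm_le_one {φ : X →L[ℝ] ℝ} (hφ : ‖φ‖ ≤ 1) {v : X} (hv : ‖v‖ ≤ C) :
    |φ v| ≤ C :=
  (φ.le_of_opNorm_le hφ v).trans (by simpa using hv)

theorem deSeq_nonneg (x : ℕ → X) : 0 ≤ deSeq x := by
  refine Real.sSup_nonneg ?_
  rintro _ ⟨φ, -, rfl⟩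
  exact caSeqR_nonneg _

theorem caSeqR_le_deSeq (hC : ∀ n, ‖x n‖ ≤ C) {φ : X →L[ℝ] ℝ} (hφ : ‖φ‖ ≤ 1) :
    caSeqR (fun n => φ (x n)) ≤ deSeq x := by
  refine le_csSup ⟨2 * C, ?_⟩ ⟨φ, hφ, rfl⟩
  rintro _ ⟨ψ, hψ, rfl⟩
  exact caSeqR_le fun n => abs_apply_le_of_norm_le_one hψ (hC n)

theorem exists_lt_caSeqR_of_lt_deSeq {β : ℝ} (h : β < deSeq x) :
    ∃ φ : X →L[ℝ] ℝ, ‖φ‖ ≤ 1 ∧ β < caSeqR fun n => φ (x n) := by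
  obtain ⟨_, ⟨φ, hφ, rfl⟩, hlt⟩ := exists_lt_of_lt_csSup (by exact ⟨_, 0, by simp, rfl⟩) h
  exact ⟨φ, hφ, hlt⟩

theorem wdeSeq_le_deSeq_comp (x : ℕ → X) {n : ℕ → ℕ} (hn : StrictMono n) :
    wdeSeq x ≤ deSeq (x ∘ n) := by
  refine csInf_le ⟨0, ?_⟩ ⟨n, hn, rfl⟩
  rintro _ ⟨m, -, rfl⟩
  exact deSeq_nonneg _

theorem wcaSeq_le_mul_wdeSeq (hc : 0 ≤ c)
    (h : ∀ n : ℕ → ℕ, StrictMono n → wcaSeq (x ∘ n) ≤ c * deSeq (x ∘ n)) :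
    wcaSeq x ≤ c * wdeSeq x := by
  have hle (n : ℕ → ℕ) (hn : StrictMono n) : wcaSeq x ≤ c * deSeq (x ∘ n) :=
    (wcaSeq_le_wcaSeq_comp x hn).trans (h n hn)
  rcases hc.eq_or_lt with rfl | hc
  · simpa using hle id strictMono_id
  · rw [← div_le_iff₀' hc]
    refine le_csInf ⟨_, id, strictMono_id, rfl⟩ ?_
    rintro _ ⟨n, hn, rfl⟩
    exact (div_le_iff₀' hc).2 (hle n hn)

/-- The lower `ℓ¹`-estimate `κ ∑ |a_k| ≤ ‖∑ a_k y_k‖` for finite linear combinations; together with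
boundedness of `y` it expresses equivalence with the unit vector basis of `ℓ¹`. -/
def HasLowerEllOneEstimate (κ : ℝ) (y : ℕ → X) : Prop :=
  ∀ (N : ℕ) (a : ℕ → ℝ),
    κ * ∑ k ∈ Finset.range N, |a k| ≤ ‖∑ k ∈ Finset.range N, a k • y k‖

theorem HasLowerEllOneEstimate.exists_functional_eq (hy : HasLowerEllOneEstimate κ y) {t : ℕ → ℝ}
    (ht : ∀ k, |t k| ≤ κ) : ∃ φ : X →L[ℝ] ℝ, ‖φ‖ ≤ 1 ∧ ∀ k, φ (y k) = t k := by
  obtain ⟨φ, hφ, hφt⟩ := exists_norm_le_one_comp_eq (Finsupp.linearCombination ℝ y)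
    (Finsupp.linearCombination ℝ t) fun a => by
      obtain ⟨N, hN⟩ := a.support.exists_nat_subset_range
      rw [Finsupp.linearCombination_apply, Finsupp.linearCombination_apply,
        Finsupp.sum_of_support_subset a hN _ (by simp),
        Finsupp.sum_of_support_subset a hN _ (by simp)]
      calc ‖∑ k ∈ Finset.range N, a k • t k‖
          ≤ ∑ k ∈ Finset.range N, ‖a k • t k‖ := norm_sum_le _ _
        _ ≤ ∑ k ∈ Finset.range N, κ * |a k| := Finset.sum_le_sum fun k _ => by
          rw [norm_smul, mul_comm, Real.norm_eq_abs, Real.norm_eq_abs]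
          gcongr
          exact ht k
        _ = κ * ∑ k ∈ Finset.range N, |a k| := (Finset.mul_sum ..).symm
        _ ≤ ‖∑ k ∈ Finset.range N, a k • y k‖ := hy N a
  exact ⟨φ, hφ, fun k => by simpa using hφt (Finsupp.single k 1)⟩

/-- The pair of open half-spaces `{φ | φ (x n) < a}`, coloured `false`, and `{φ | b < φ (x n)}`,
coloured `true`, of the dual space. -/
def dualHalfSpaces (x : ℕ → X) (a b : ℝ) : Bool → ℕ → Set (X →L[ℝ] ℝ)
  | false, n => {φ | φ (x n) < a}
  | true, n => {φ | b < φ (x n)}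

theorem hasLowerEllOneEstimate_of_independent {a b : ℝ}
    (h : ∀ (σ : ℕ → Bool) (K : ℕ), ∃ φ : X →L[ℝ] ℝ, ‖φ‖ ≤ 1 ∧
      ∀ k < K, φ ∈ dualHalfSpaces x a b (σ k) k) :
    HasLowerEllOneEstimate ((b - a) / 2) x := by
  intro N t
  obtain ⟨φ, hφ, hφσ⟩ := h (fun k => decide (0 ≤ t k)) N
  obtain ⟨ψ, hψ, hψσ⟩ := h (fun k => decide (t k < 0)) N
  have hterm : ∀ k ∈ Finset.range N, (b - a) * |t k| ≤ (φ - ψ) (t k • x k) := by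
    intro k hk
    specialize hφσ k (Finset.mem_range.1 hk)
    specialize hψσ k (Finset.mem_range.1 hk)
    rw [map_smul, smul_eq_mul, sub_apply]
    rcases le_or_gt 0 (t k) with htk | htk
    · simp only [htk, htk.not_gt, decide_true, decide_false] at hφσ hψσ
      have hgap : b - a ≤ φ (x k) - ψ (x k) := (sub_lt_sub hφσ hψσ).le
      rw [abs_of_nonneg htk, mul_comm]
      gcongr
    · simp only [htk, htk.not_ge, decide_true, decide_false] at hφσ hψσ
      have hgap : b - a ≤ ψ (x k) - φ (x k) := (sub_lt_sub hψσ hφσ).le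
      rw [abs_of_neg htk]
      nlinarith
  have hnorm : ‖φ - ψ‖ ≤ 2 := by linarith [norm_sub_le φ ψ, hφ, hψ]
  have hsum : (b - a) * ∑ k ∈ Finset.range N, |t k| ≤ 2 * ‖∑ k ∈ Finset.range N, t k • x k‖ :=
    calc (b - a) * ∑ k ∈ Finset.range N, |t k|
        ≤ ∑ k ∈ Finset.range N, (φ - ψ) (t k • x k) := by
          rw [Finset.mul_sum]
          exact Finset.sum_le_sum hterm
      _ = (φ - ψ) (∑ k ∈ Finset.range N, t k • x k) := (map_sum _ _ _).symm
      _ ≤ 2 * ‖∑ k ∈ Finset.range N, t k • x k‖ :=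
          (le_abs_self _).trans ((φ - ψ).le_of_opNorm_le hnorm _)
  linarith

/-- Quantitative Rosenthal `ℓ¹`-theorem. -/
theorem exists_subseq_hasLowerEllOneEstimate (hC : ∀ n, ‖x n‖ ≤ C) (hκ : 2 * κ < wdeSeq x) :
    ∃ n : ℕ → ℕ, StrictMono n ∧ HasLowerEllOneEstimate κ (x ∘ n) := by
  obtain ⟨β, hκβ, hβ⟩ := exists_between hκ
  obtain ⟨I, hI, hcross⟩ := exists_finite_crossing_of_lt_caSeqR C hκβ
  have hosc : ∀ M : Set ℕ, M.Infinite → ∃ a ∈ I, ∃ φ ∈ {φ : X →L[ℝ] ℝ | ‖φ‖ ≤ 1},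
      ∀ b, {n ∈ M | φ ∈ dualHalfSpaces x a (a + 2 * κ) b n}.Infinite := by
    intro M hM
    have he : StrictMono (Nat.nth (· ∈ M)) := Nat.nth_strictMono hM
    have heM : ∀ k, Nat.nth (· ∈ M) k ∈ M := Nat.nth_mem_of_infinite hM
    obtain ⟨φ, hφ, hca⟩ := exists_lt_caSeqR_of_lt_deSeq (hβ.trans_le (wdeSeq_le_deSeq_comp x he))
    obtain ⟨a, ha, hbelow, habove⟩ :=
      hcross _ (fun k => abs_apply_le_of_norm_le_one hφ (hC _)) hca
    refine ⟨a, ha, φ, hφ, fun b => Nat.frequently_atTop_iff_infinite.1 ?_⟩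
    cases b
    · exact he.tendsto_atTop.frequently (hbelow.mono fun k hk => ⟨heM k, hk⟩)
    · exact he.tendsto_atTop.frequently (habove.mono fun k hk => ⟨heM k, hk⟩)
  obtain ⟨a, -, M, hM, hoscM⟩ :=
    exists_oscillatesOn_of_finite hI Set.infinite_univ fun N _ hN => hosc N hN
  obtain ⟨n, hn, hind⟩ := hoscM.exists_strictMono_independent hM
  have hest : HasLowerEllOneEstimate ((a + 2 * κ - a) / 2) (x ∘ n) :=
    hasLowerEllOneEstimate_of_independent fun σ K => by
      obtain ⟨φ, hφ, hφσ⟩ := hind σ K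
      refine ⟨φ, hφ, fun k hk => ?_⟩
      specialize hφσ k hk
      cases hσ : σ k <;> rwa [hσ] at hφσ
  exact ⟨n, hn, by convert hest using 1; ring⟩

theorem HasLowerEllOneEstimate.two_mul_mul_le_deSeq {n : ℕ → ℕ} {r : ℝ}
    (hest : HasLowerEllOneEstimate κ fun k => NormedSpace.normalize (x (n k))) (hκ : 0 ≤ κ)
    (hC : ∀ n, ‖x n‖ ≤ C) (hn : StrictMono n)
    (hr : Tendsto (fun k => ‖x (n k)‖) atTop (nhds r)) :
    2 * κ * r ≤ deSeq x := by
  obtain ⟨φ, hφ, hφn⟩ := hest.exists_functional_eq (t := fun k => (-1) ^ k * κ)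
    fun k => by simp [abs_mul, abs_of_nonneg hκ]
  have hval (k : ℕ) : φ (x (n k)) = ‖x (n k)‖ * ((-1) ^ k * κ) := by
    rw [← hφn, ← smul_eq_mul, ← map_smul, NormedSpace.norm_smul_normalize]
  have heven : Tendsto (fun k : ℕ => 2 * k) atTop atTop :=
    (strictMono_mul_left_of_pos two_pos).tendsto_atTop
  have hodd : Tendsto (fun k : ℕ => 2 * k + 1) atTop atTop :=
    (tendsto_add_atTop_nat 1).comp heven
  have hpos : Tendsto (fun k => φ (x (n (2 * k)))) atTop (nhds (r * κ)) := by
    simpa [hval] using (hr.comp heven).mul_const κ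
  have hneg : Tendsto (fun k => φ (x (n (2 * k + 1)))) atTop (nhds (-(r * κ))) := by
    simpa [hval, pow_succ] using ((hr.comp hodd).mul_const κ).neg
  calc 2 * κ * r = r * κ - -(r * κ) := by ring
    _ ≤ |r * κ - -(r * κ)| := le_abs_self _
    _ ≤ caSeqR fun k => φ (x k) :=
        abs_sub_le_caSeqR (fun k => abs_apply_le_of_norm_le_one hφ (hC k))
          (hn.tendsto_atTop.comp heven) (hn.tendsto_atTop.comp hodd) hpos hneg
    _ ≤ deSeq x := caSeqR_le_deSeq hC hφ

theorem norm_sub_smul_normalize_le (v : X) (r : ℝ) :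
    ‖v - r • NormedSpace.normalize v‖ ≤ |‖v‖ - r| := by
  have hv : ‖NormedSpace.normalize v‖ ≤ 1 := by
    rcases eq_or_ne v 0 with rfl | hv
    · simp
    · exact (NormedSpace.norm_normalize hv).le
  calc ‖v - r • NormedSpace.normalize v‖
      = ‖(‖v‖ - r) • NormedSpace.normalize v‖ := by
        rw [sub_smul, NormedSpace.norm_smul_normalize]
    _ ≤ |‖v‖ - r| := by
        rw [norm_smul, Real.norm_eq_abs]
        exact mul_le_of_le_one_right (abs_nonneg _) hv

theorem norm_sub_le_mul_norm_normalize_sub (v w : X) {r : ℝ} (hr : 0 ≤ r) :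
    ‖v - w‖ ≤ r * ‖NormedSpace.normalize v - NormedSpace.normalize w‖ +
      |‖v‖ - r| + |‖w‖ - r| := by
  set v' := NormedSpace.normalize v
  set w' := NormedSpace.normalize w
  calc ‖v - w‖ = ‖r • (v' - w') + (v - r • v') - (w - r • w')‖ := by
        rw [smul_sub]
        abel_nf
    _ ≤ ‖r • (v' - w')‖ + ‖v - r • v'‖ + ‖w - r • w'‖ :=
        (norm_sub_le _ _).trans (add_le_add_left (norm_add_le _ _) _)
    _ ≤ r * ‖v' - w'‖ + |‖v‖ - r| + |‖w‖ - r| := by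
        rw [norm_smul, Real.norm_of_nonneg hr]
        gcongr <;> exact norm_sub_smul_normalize_le _ r

theorem exists_tail_normalize_separated {α δ r : ℝ} (hr : 0 < r)
    (hy : Tendsto (fun k => ‖y k‖) atTop (nhds r)) (hsep : Pairwise fun k l => α ≤ ‖y k - y l‖)
    (hδ : r * δ < α) :
    ∃ K, (∀ k, ‖NormedSpace.normalize (y (k + K))‖ = 1) ∧ Pairwise fun k l =>
      δ ≤ ‖NormedSpace.normalize (y (k + K)) - NormedSpace.normalize (y (l + K))‖ := by
  have hnear : ∀ᶠ k in atTop, |‖y k‖ - r| < (α - r * δ) / 2 :=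
    (tendsto_order.1 (tendsto_iff_norm_sub_tendsto_zero.1 hy)).2 _ (by linarith)
  obtain ⟨K, hK⟩ := eventually_atTop.1 (hnear.and (hy.eventually_const_lt hr))
  refine ⟨K, fun k => NormedSpace.norm_normalize (norm_pos_iff.1 (hK _ (K.le_add_left k)).2),
    fun k l hkl => le_of_mul_le_mul_left ?_ hr⟩
  linarith [hsep ((add_left_injective K).ne hkl), (hK _ (K.le_add_left k)).1,
    (hK _ (K.le_add_left l)).1, norm_sub_le_mul_norm_normalize_sub (y (k + K)) (y (l + K)) hr.le]

end NormedSpace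

section StrongSchur

variable {X : Type*} [NormedAddCommGroup X] [NormedSpace ℝ X] {x : ℕ → X} {c : ℝ}

theorem hasCStrongSchur_iff_hasLowerEllOneEstimate (hc : 0 ≤ c) :
    HasCStrongSchur X c ↔ ∀ δ κ : ℝ, 0 < δ → 0 < κ → 2 * c * κ < δ → ∀ u : ℕ → X,
      (∀ n, ‖u n‖ = 1) → (Pairwise fun m n => δ ≤ ‖u m - u n‖) →
        ∃ n : ℕ → ℕ, StrictMono n ∧ HasLowerEllOneEstimate κ (u ∘ n) := by
  constructor
  · intro h δ κ hδ hκ hlt u hu hsep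
    have hδ2 : δ ≤ 2 := by
      linarith [hsep zero_ne_one, norm_sub_le (u 0) (u 1), hu 0, hu 1]
    have hε : 0 < κ⁻¹ - 2 * c / δ := by
      rw [sub_pos, div_lt_iff₀ hδ, ← div_eq_inv_mul, lt_div_iff₀ hκ]
      exact hlt
    have hest := h δ hδ hδ2 _ hε u hu fun m n hmn => hsep hmn
    rwa [add_sub_cancel, inv_inv] at hest
  · intro h δ hδ _ ε hε u hu hsep
    have hpos : 0 < 2 * c / δ + ε := by positivity
    refine h δ _ hδ (inv_pos.2 hpos) ?_ u hu fun m n hmn => hsep m n hmn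
    rw [← div_eq_mul_inv, div_lt_iff₀ hpos, mul_add, mul_div_cancel₀ _ hδ.ne']
    exact lt_add_of_pos_right _ (mul_pos hδ hε)

theorem HasCStrongSchur.le_deSeq_of_mul_lt_wcaSeq (h : HasCStrongSchur X c) (hc : 0 ≤ c) {C : ℝ}
    (hC : ∀ n, ‖x n‖ ≤ C) {s : ℝ} (hs : c * s < wcaSeq x) : s ≤ deSeq x := by
  rcases le_or_gt s 0 with hs0 | hs0
  · exact hs0.trans (deSeq_nonneg x)
  obtain ⟨α, hsα, hα⟩ := exists_between hs
  have hα0 : 0 < α := (mul_nonneg hc hs0.le).trans_lt hsα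
  obtain ⟨n, hn, hsep, r, hr⟩ := exists_separated_subseq_tendsto_norm hC hα0.le hα
  have hr0 : 0 < r := by linarith [le_two_mul_of_tendsto_norm hr hsep]
  obtain ⟨δ, hsδ, hδα⟩ := exists_between (div_lt_div_of_pos_right hsα hr0)
  have hδ0 : 0 < δ := (by positivity : 0 ≤ c * s / r).trans_lt hsδ
  obtain ⟨K, hunit, hsepK⟩ := exists_tail_normalize_separated hr0 hr hsep ((lt_div_iff₀' hr0).1 hδα)
  obtain ⟨m, hm, hest⟩ := (hasCStrongSchur_iff_hasLowerEllOneEstimate hc).1 h δ (s / (2 * r)) hδ0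
    (by positivity) (by rwa [show 2 * c * (s / (2 * r)) = c * s / r by field_simp]) _ hunit hsepK
  have htail : StrictMono fun k => m k + K := hm.add_const K
  calc s = 2 * (s / (2 * r)) * r := by field_simp
    _ ≤ deSeq x := HasLowerEllOneEstimate.two_mul_mul_le_deSeq hest (by positivity) hC
        (hn.comp htail) (hr.comp htail.tendsto_atTop)

theorem HasCStrongSchur.wcaSeq_le_mul_deSeq (h : HasCStrongSchur X c) (hc : 0 ≤ c) {C : ℝ}
    (hC : ∀ n, ‖x n‖ ≤ C) : wcaSeq x ≤ c * deSeq x := by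
  have hlim : Tendsto (fun s => c * s) (nhdsWithin (deSeq x) (Set.Ioi (deSeq x)))
      (nhds (c * deSeq x)) :=
    ((continuous_const_mul c).tendsto _).mono_left nhdsWithin_le_nhds
  refine ge_of_tendsto hlim (eventually_mem_nhdsWithin.mono fun s hs => ?_)
  by_contra! hlt
  exact (h.le_deSeq_of_mul_lt_wcaSeq hc hC hlt).not_gt hs

theorem hasCStrongSchur_of_wcaSeq_le_mul_deSeq (hc : 0 ≤ c)
    (h : ∀ x : ℕ → X, (∃ C : ℝ, ∀ n, ‖x n‖ ≤ C) → wcaSeq x ≤ c * deSeq x) :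
    HasCStrongSchur X c := by
  refine (hasCStrongSchur_iff_hasLowerEllOneEstimate hc).2 fun δ κ _ _ hlt u hu hsep => ?_
  have hu1 (n : ℕ) : ‖u n‖ ≤ 1 := (hu n).le
  have hδ : δ ≤ c * wdeSeq u := (le_wcaSeq hu1 hsep).trans
    (wcaSeq_le_mul_wdeSeq hc fun n _ => h _ ⟨1, fun k => hu1 (n k)⟩)
  have hκ : 2 * κ < wdeSeq u := lt_of_mul_lt_mul_left (by linarith) hc
  exact exists_subseq_hasLowerEllOneEstimate hu1 hκ

end StrongSchur

theorem hasCStrongSchur_iff_wca_le_de_general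
    (X : Type*) [NormedAddCommGroup X] [NormedSpace ℝ X] {c : ℝ} (hc : 0 ≤ c) :
    HasCStrongSchur X c ↔
      ∀ x : ℕ → X, (∃ C : ℝ, ∀ n, ‖x n‖ ≤ C) → wcaSeq x ≤ c * deSeq x :=
  ⟨fun h _ ⟨_, hC⟩ => h.wcaSeq_le_mul_deSeq hc hC, hasCStrongSchur_of_wcaSeq_le_mul_deSeq hc⟩

/-- A real Banach space has the `c`-strong Schur property iff
`wca(x_n) ≤ c · de(x_n)` for every bounded sequence `(x_n)`. -/
theorem hasCStrongSchur_iff_wca_le_de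
    (X : Type*) [NormedAddCommGroup X] [NormedSpace ℝ X] [CompleteSpace X]
    (c : ℝ) (hc : 1 ≤ c) :
    HasCStrongSchur X c ↔
      ∀ x : ℕ → X, (∃ C : ℝ, ∀ n, ‖x n‖ ≤ C) → wcaSeq x ≤ c * deSeq x :=
  hasCStrongSchur_iff_wca_le_de_general X (zero_le_one.trans hc)
end
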